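/- Let D ≥ 4 be an even integer and λ = D/2 − 1. Let Ḡ be a finite graph with vertex set V̄ = V_int ⊔ {v₀, v₁, v_z, v_∞} and real edge weights ν : E(Ḡ) → ℝ satisfying the completion conditions: Σ_{e ∋ v} ν_e = D/λ for every v ∈ V_int, and Σ_{e ∋ v} ν_e = 0 for each v ∈ {v₀, v₁, v_z, v_∞}. Fix x_{v₀} = 0, x_{v₁} = e ∈ ℝ^D with ‖e‖ = 1, and x_{v_z} = y ∈ ℝ^D such that 0, e, y are pairwise distinct and not collinear. For V ⊆ V̄ set N_{Ḡ[V]} = Σ_{{u,w} ∈ E(Ḡ), u ∈ V, w ∈ V} ν_{uw} − ((λ+1)/λ)·|V ∩ V_int|. Then the function (x_v)_{v ∈ V_int} ↦ ∏_{{u,w} ∈ E(Ḡ), v_∞ ∉ {u,w}} ‖x_u − x_w‖^{−2λν_{uw}} is Lebesgue integrable on (ℝ^D)^{V_int} if and only if for every subset V ⊆ V̄ with |V| ≥ 2 and |V ∩ {v₀, v₁, v_z, v_∞}| ≤ 1 it holds that N_{Ḡ[V]} < (|V ∩ {v₀, v₁, v_z, v_∞}| − 1)·(λ+1)/λ. 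-/

import Mathlib

open MeasureTheory

/-!
Stereographic projection puts all vertices, including `v_∞`, on a sphere with its chordal metric.
Each propagator acquires a conformal factor at either end, and the completion conditions say exactly
that these factors combine to the density of the spherical measure at an internal vertex and cancel
at an external one. What remains is the integral of a product of powers of distances over a bounded
metric space in which a ball of radius `r` has volume comparable to `r ^ D`.

If the inequalities hold, they still hold with some `δ < D` in place of `D`. Merging the two closest
points, and repeating this until only the external points are left, bounds the integrand by a sum
over forests of products of integrable kernels `dist ^ (-δ)`: by the inequalities, a merged cluster
contributes a non-negative power of its size.

If the inequality fails for `W`, shrink `W` onto one of its points. The configurations at different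
geometric scales form disjoint regions, each of which contributes at least the same positive amount.
-/

open scoped ENNReal Topology

namespace GraphicalFunction

section Weights

theorem abs_sum_mul_sub_sum_mul_le {ι κ : Type*} [Fintype ι] [Fintype κ] {b f g : ι → κ → ℝ}
    {c : ℝ} (h : ∀ i j, |f i j - g i j| ≤ c) :
    |∑ i, ∑ j, b i j * f i j - ∑ i, ∑ j, b i j * g i j| ≤ (∑ i, ∑ j, |b i j|) * c := by
  simp only [← Finset.sum_sub_distrib, ← mul_sub, Finset.sum_mul]
  refine (Finset.abs_sum_le_sum_abs _ _).trans <| Finset.sum_le_sum fun i _ ↦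
    (Finset.abs_sum_le_sum_abs _ _).trans <| Finset.sum_le_sum fun j _ ↦ ?_
  rw [abs_mul]
  exact mul_le_mul_of_nonneg_left (h i j) (abs_nonneg _)

theorem abs_log_sub_log_le {a c K : ℝ} (ha : 0 < a) (hc : 0 < c) (hac : a ≤ K * c)
    (hca : c ≤ K * a) : |Real.log a - Real.log c| ≤ Real.log K := by
  have hK : 0 < K := pos_of_mul_pos_left (ha.trans_le hac) hc.le
  have h₁ := Real.log_le_log ha hac
  have h₂ := Real.log_le_log hc hca
  rw [Real.log_mul hK.ne' hc.ne'] at h₁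
  rw [Real.log_mul hK.ne' ha.ne'] at h₂
  rw [abs_le]
  constructor <;> linarith

theorem abs_log_dist_sub_log_dist_le {X : Type*} [MetricSpace X] {w u q : X} {K : ℝ}
    (hwq : w ≠ q) (huq : u ≠ q) (hwu_wq : dist w u ≤ K * dist w q)
    (hwu_uq : dist w u ≤ K * dist u q) :
    |Real.log (dist w q) - Real.log (dist u q)| ≤ Real.log (K + 1) := by
  refine abs_log_sub_log_le (dist_pos.mpr hwq) (dist_pos.mpr huq) ?_ ?_
  · linarith [dist_triangle w u q]
  · linarith [dist_triangle u w q, dist_comm u w]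

theorem exists_pos_forall_ne_le_dist {V X : Type*} [Finite V] [MetricSpace X] {x : V → X}
    (hx : x.Injective) : ∃ m > 0, m ≤ 1 ∧ ∀ u w, u ≠ w → m ≤ dist (x u) (x w) := by
  have hle {r : ℝ} (hr : 0 < r) : ∀ᶠ m in 𝓝[>] (0 : ℝ), m ≤ r :=
    (eventually_le_nhds hr).filter_mono nhdsWithin_le_nhds
  have hdist : ∀ᶠ m in 𝓝[>] (0 : ℝ), ∀ u w, u ≠ w → m ≤ dist (x u) (x w) := by
    simp only [Filter.eventually_all]
    exact fun u w huw ↦ hle (dist_pos.mpr (hx.ne huw))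
  obtain ⟨m, hm, hm₁, hm_dist⟩ := (eventually_mem_nhdsWithin.and
    ((hle one_pos).and hdist)).exists
  exact ⟨m, hm, hm₁, hm_dist⟩

variable {V : Type*}

/-- The weight `b` is subcritical with exponent `δ` relative to the external vertices `ext` if a
cluster of `k` vertices, at most one of them external, has total weight at most `δ * (k - 1)`.
Every unordered pair is counted twice in the total weight. -/
def IsSubcritical [DecidableEq V] (b : V → V → ℝ) (ext : Finset V) (δ : ℝ) : Prop :=
  ∀ W : Finset V, W.Nonempty → (W ∩ ext).card ≤ 1 →
    ∑ u ∈ W, ∑ w ∈ W, b u w ≤ δ * ((W.card : ℝ) - 1)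

/-- The map `c` is a retraction of the vertex set onto `T`; its fibres are the clusters into which
the vertices have been collapsed. -/
structure IsRetractionOnto (c : V → V) (T : Finset V) : Prop where
  mem (v : V) : c v ∈ T
  eq_self {v : V} : v ∈ T → c v = v

variable [DecidableEq V]

/-- The parent map `π` makes `s` a forest with roots in `root`: the vertices of `s` can be added one
by one, each with its parent among the roots and the vertices already present. -/
inductive IsForest (root : Finset V) (π : V → V) : Finset V → Prop
  | empty : IsForest root π ∅
  | insert {w : V} {s : Finset V} : w ∉ s → w ∉ root → π w ∈ s ∪ root → IsForest root π s →
      IsForest root π (insert w s)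

namespace IsForest

variable {root s : Finset V} {π π' : V → V} {w : V}

theorem parent_mem (h : IsForest root π s) (hw : w ∈ s) : π w ∈ s ∪ root := by
  induction h with
  | empty => simp at hw
  | @insert v s _ _ hπ _ ih =>
    rw [Finset.insert_union]
    refine Finset.mem_insert_of_mem ?_
    rcases Finset.mem_insert.mp hw with rfl | hw
    · exact hπ
    · exact ih hw

theorem parent_ne (h : IsForest root π s) (hw : w ∈ s) : π w ≠ w := by
  induction h with
  | empty => simp at hw
  | insert hvs hvr hpar _ ih =>
    rcases Finset.mem_insert.mp hw with rfl | hw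
    · rintro h
      simp [h, hvs, hvr] at hpar
    · exact ih hw

theorem congr (h : IsForest root π s) (hπ : ∀ w ∈ s, π w = π' w) : IsForest root π' s := by
  induction h with
  | empty => exact .empty
  | insert hws hwr hpar _ ih =>
    refine .insert hws hwr (hπ _ (Finset.mem_insert_self _ _) ▸ hpar) (ih fun v hv ↦ ?_)
    exact hπ v (Finset.mem_insert_of_mem hv)

end IsForest

namespace IsRetractionOnto

variable {c : V → V} {T : Finset V}

theorem update_comp {w u : V} (hc : IsRetractionOnto c T) (hu : u ∈ T) (huw : u ≠ w) :
    IsRetractionOnto (Function.update id w u ∘ c) (T.erase w) where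
  mem v := by
    by_cases hv : c v = w
    · simp [hv, huw, hu]
    · simp [hv, hc.mem v]
  eq_self {v} hv := by
    obtain ⟨hvw, hvT⟩ := Finset.mem_erase.mp hv
    simp [hc.eq_self hvT, hvw]

variable [Fintype V] {ext : Finset V} {b : V → V → ℝ} {δ : ℝ}

theorem sum_sum_ite_le (hc : IsRetractionOnto c T) (hT : ext ⊆ T) (hb : IsSubcritical b ext δ) :
    ∑ u, ∑ w, (if c u = c w then b u w else 0) ≤ δ * ((Fintype.card V : ℝ) - T.card) := by
  let fibre (v : V) : Finset V := Finset.univ.filter fun u ↦ c u = v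
  have hmem {u v : V} : u ∈ fibre v ↔ c u = v := by simp [fibre]
  have hsum : ∑ u, ∑ w, (if c u = c w then b u w else 0)
      = ∑ v ∈ T, ∑ u ∈ fibre v, ∑ w ∈ fibre v, b u w := by
    rw [← Finset.sum_fiberwise_of_maps_to (fun v _ ↦ hc.mem v)]
    refine Finset.sum_congr rfl fun v _ ↦ Finset.sum_congr rfl fun u hu ↦ ?_
    rw [Finset.sum_filter, hmem.mp hu]
    simp only [eq_comm]
  have hcard : (Fintype.card V : ℝ) = ∑ v ∈ T, ((fibre v).card : ℝ) := by
    exact_mod_cast Finset.card_eq_sum_card_fiberwise (s := Finset.univ) fun v _ ↦ hc.mem v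
  have hfibre (v : V) (hv : v ∈ T) :
      ∑ u ∈ fibre v, ∑ w ∈ fibre v, b u w ≤ δ * (((fibre v).card : ℝ) - 1) := by
    refine hb _ ⟨v, hmem.mpr (hc.eq_self hv)⟩ (Finset.card_le_one.mpr fun p hp q hq ↦ ?_)
    rw [Finset.mem_inter, hmem] at hp hq
    rw [← hc.eq_self (hT hp.2), ← hc.eq_self (hT hq.2), hp.1, hq.1]
  calc ∑ u, ∑ w, (if c u = c w then b u w else 0)
      ≤ ∑ v ∈ T, δ * (((fibre v).card : ℝ) - 1) := hsum.trans_le (Finset.sum_le_sum hfibre)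
    _ = δ * ((Fintype.card V : ℝ) - T.card) := by
      rw [← Finset.mul_sum, Finset.sum_sub_distrib, hcard]; simp

end IsRetractionOnto

end Weights

section Collapse

variable {V : Type*} [DecidableEq V] [MetricSpace V]

/-- The logarithmic distance of two clusters, where a cluster has distance `m` from itself. -/
noncomputable def scaledLogDist (m : ℝ) (p q : V) : ℝ :=
  if p = q then Real.log m else Real.log (dist p q)

/-- The logarithm of the propagator product times the volume factor `m ^ δ` for each of the
`|V| - |T|` collapsed vertices, when the vertices have been collapsed by `c` onto `T` into clusters
of size `m`. -/
noncomputable def collapsePotential [Fintype V] (b : V → V → ℝ) (δ : ℝ) (T : Finset V) (c : V → V)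
    (m : ℝ) : ℝ :=
  δ * ((Fintype.card V : ℝ) - T.card) * Real.log m
    - ∑ u, ∑ w, b u w * scaledLogDist m (c u) (c w)

section

variable [Fintype V] {b : V → V → ℝ} {δ : ℝ} {ext T : Finset V} {c : V → V}

/-- The coefficient of `log m` is non-negative by subcriticality. -/
theorem collapsePotential_mono (hb : IsSubcritical b ext δ) (hT : ext ⊆ T)
    (hc : IsRetractionOnto c T) {m r : ℝ} (hm : 0 < m) (hmr : m ≤ r) :
    collapsePotential b δ T c m ≤ collapsePotential b δ T c r := by
  have split (t : ℝ) : collapsePotential b δ T c t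
      = (δ * ((Fintype.card V : ℝ) - T.card) - ∑ u, ∑ w, if c u = c w then b u w else 0)
          * Real.log t
        - ∑ u, ∑ w, if c u = c w then 0 else b u w * Real.log (dist (c u) (c w)) := by
    rw [collapsePotential, sub_mul, sub_sub, Finset.sum_mul, ← Finset.sum_add_distrib]
    simp only [Finset.sum_mul, ← Finset.sum_add_distrib, scaledLogDist]
    congr! 3
    split_ifs <;> ring
  rw [split, split]
  have := hc.sum_sum_ite_le hT hb
  gcongr

theorem collapsePotential_ext_le (hb : IsSubcritical b ext δ) {K : ℝ} (hK : 1 ≤ K)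
    (hdiam : ∀ u w : V, dist u w ≤ 1) (hext : ∀ p ∈ ext, ∀ q ∈ ext, p ≠ q → 1 ≤ K * dist p q)
    (hc : IsRetractionOnto c ext) {m : ℝ} (hm : 0 < m) (hm₁ : m ≤ 1) :
    collapsePotential b δ ext c m ≤ (∑ u, ∑ w, |b u w|) * Real.log K := by
  have hbound (u w : V) : |scaledLogDist 1 (c u) (c w) - 0| ≤ Real.log K := by
    rw [sub_zero, scaledLogDist]
    split_ifs with huw
    · simpa using Real.log_nonneg hK
    · have h₁ := hext _ (hc.mem u) _ (hc.mem w) huw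
      have h₂ : dist (c u) (c w) ≤ K * 1 := (hdiam _ _).trans (by linarith)
      simpa using abs_log_sub_log_le (dist_pos.mpr huw) one_pos h₂ h₁
  have h := abs_sum_mul_sub_sum_mul_le (b := b) hbound
  simp only [mul_zero, Finset.sum_const_zero, sub_zero] at h
  refine (collapsePotential_mono hb subset_rfl hc hm hm₁).trans ?_
  rw [collapsePotential, Real.log_one, mul_zero, zero_sub]
  exact (neg_le_abs _).trans h

end

theorem abs_scaledLogDist_sub_update_le {T : Finset V} {w u p q : V} {K : ℝ} (hK : 1 ≤ K)
    (hw : w ∈ T) (hu : u ∈ T) (huw : u ≠ w) (hp : p ∈ T) (hq : q ∈ T)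
    (hsep : ∀ p ∈ T, ∀ q ∈ T, p ≠ q → dist w u ≤ K * dist p q) :
    |scaledLogDist (dist w u) p q - scaledLogDist (dist w u) (Function.update id w u p)
      (Function.update id w u q)| ≤ Real.log (K + 1) := by
  have hlog : 0 ≤ Real.log (K + 1) := Real.log_nonneg (by linarith)
  have key {v : V} (hv : v ∈ T) (hvw : w ≠ v) (hvu : u ≠ v) :=
    abs_log_dist_sub_log_dist_le hvw hvu (hsep w hw v hv hvw) (hsep u hu v hv hvu)
  unfold scaledLogDist
  rcases eq_or_ne w p with rfl | hpw <;> rcases eq_or_ne w q with rfl | hqw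
  · simpa using hlog
  · rcases eq_or_ne u q with rfl | hqu
    · simp [hlog, huw]
    · simpa [hqw, hqw.symm, hqu] using key hq hqw hqu
  · rcases eq_or_ne u p with rfl | hpu
    · simp [hlog, huw, dist_comm]
    · simpa [hpw.symm, hpu.symm, dist_comm p] using key hp hpw hpu
  · simpa [hpw.symm, hqw.symm] using hlog

theorem exists_closest_pair {s t : Finset V} (hs : s.Nonempty) (ht : t.Nonempty)
    (hst : Disjoint s t) : ∃ w ∈ s, ∃ u ∈ s ∪ t, u ≠ w ∧
      ∀ p ∈ s, ∀ q ∈ s ∪ t, p ≠ q → dist w u ≤ dist p q := by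
  obtain ⟨a, ha⟩ := hs
  obtain ⟨c, hc⟩ := ht
  have hne : ((s ×ˢ (s ∪ t)).filter fun p ↦ p.2 ≠ p.1).Nonempty :=
    ⟨(a, c), by simpa [ha, hc] using (Finset.disjoint_iff_ne.mp hst a ha c hc).symm⟩
  obtain ⟨⟨w, u⟩, hwu, hmin⟩ := Finset.exists_min_image _ (fun p : V × V ↦ dist p.1 p.2) hne
  simp only [Finset.mem_filter, Finset.mem_product] at hwu hmin
  exact ⟨w, hwu.1.1, u, hwu.1.2, hwu.2, fun p hp q hq hpq ↦ hmin (p, q) ⟨⟨hp, hq⟩, hpq.symm⟩⟩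

theorem dist_le_mul_dist_of_closest {s t : Finset V} {w u : V} {K : ℝ} (hK : 1 ≤ K)
    (hdiam : dist w u ≤ 1) (ht : ∀ p ∈ t, ∀ q ∈ t, p ≠ q → 1 ≤ K * dist p q)
    (hmin : ∀ p ∈ s, ∀ q ∈ s ∪ t, p ≠ q → dist w u ≤ dist p q) :
    ∀ p ∈ s ∪ t, ∀ q ∈ s ∪ t, p ≠ q → dist w u ≤ K * dist p q := by
  intro p hp q hq hpq
  by_cases hps : p ∈ s
  · exact (hmin p hps q hq hpq).trans (le_mul_of_one_le_left dist_nonneg hK)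
  by_cases hqs : q ∈ s
  · rw [dist_comm p q]
    exact (hmin q hqs p hp hpq.symm).trans (le_mul_of_one_le_left dist_nonneg hK)
  exact hdiam.trans (ht p ((Finset.mem_union.mp hp).resolve_left hps) q
    ((Finset.mem_union.mp hq).resolve_left hqs) hpq)

variable [Fintype V] {b : V → V → ℝ} {δ K : ℝ} {ext : Finset V}

theorem collapsePotential_le_update {T : Finset V} {c : V → V} {w u : V} (hK : 1 ≤ K)
    (hc : IsRetractionOnto c T) (hw : w ∈ T) (hu : u ∈ T) (huw : u ≠ w)
    (hsep : ∀ p ∈ T, ∀ q ∈ T, p ≠ q → dist w u ≤ K * dist p q) :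
    collapsePotential b δ T c (dist w u)
      ≤ collapsePotential b δ (T.erase w) (Function.update id w u ∘ c) (dist w u)
        + (∑ u, ∑ w, |b u w|) * Real.log (K + 1) - δ * Real.log (dist w u) := by
  have h := (abs_le.mp <| abs_sum_mul_sub_sum_mul_le (b := b) fun x y ↦
    abs_scaledLogDist_sub_update_le hK hw hu huw (hc.mem x) (hc.mem y) hsep).1
  have hcard : ((T.erase w).card : ℝ) = T.card - 1 := by
    rw [← Finset.card_erase_add_one hw]; simp
  simp only [collapsePotential, hcard, Function.comp_apply]
  linarith

/-- The closest pair is merged first; all other distances then change by a bounded factor. -/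
theorem exists_isForest_collapsePotential_le (hb : IsSubcritical b ext δ) (hne : ext.Nonempty)
    (hK : 1 ≤ K) (hdiam : ∀ u w : V, dist u w ≤ 1)
    (hext : ∀ p ∈ ext, ∀ q ∈ ext, p ≠ q → 1 ≤ K * dist p q) (s : Finset V)
    (hs : Disjoint s ext) (c : V → V) (m : ℝ) (hc : IsRetractionOnto c (s ∪ ext)) (hm : 0 < m)
    (hm₁ : m ≤ 1) (hsep : ∀ p ∈ s, ∀ q ∈ s ∪ ext, p ≠ q → m ≤ dist p q) :
    ∃ π, IsForest ext π s ∧ collapsePotential b δ (s ∪ ext) c m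
      ≤ (∑ u, ∑ w, |b u w|) * Real.log (K + 1) * (s.card + 1)
        - δ * ∑ w ∈ s, Real.log (dist w (π w)) := by
  induction hn : s.card generalizing s c m with
  | zero =>
    obtain rfl := Finset.card_eq_zero.mp hn
    rw [Finset.empty_union] at hc ⊢
    refine ⟨id, .empty, (collapsePotential_ext_le hb hK hdiam hext hc hm hm₁).trans ?_⟩
    have hlog : Real.log K ≤ Real.log (K + 1) := by gcongr; linarith
    simpa using mul_le_mul_of_nonneg_left hlog (by positivity : 0 ≤ ∑ u, ∑ w, |b u w|)
  | succ n ih =>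
    obtain ⟨w, hw, u, hu, huw, hmin⟩ :=
      exists_closest_pair (Finset.card_pos.mp (by omega)) hne hs
    have hwT : w ∈ s ∪ ext := Finset.mem_union_left _ hw
    have hwext : w ∉ ext := Finset.disjoint_left.mp hs hw
    have hT : (s ∪ ext).erase w = s.erase w ∪ ext := by
      rw [Finset.erase_union_distrib, Finset.erase_eq_of_notMem hwext]
    have hsep' := dist_le_mul_dist_of_closest hK (hdiam w u) hext hmin
    obtain ⟨π, hπ, hle⟩ := ih (s.erase w) (hs.mono_left (Finset.erase_subset _ _))
      (Function.update id w u ∘ c) (dist w u) (hT ▸ hc.update_comp hu huw)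
      (dist_pos.mpr huw.symm) (hdiam w u)
      (fun p hp q hq hpq ↦ hmin p (Finset.mem_of_mem_erase hp) q
        (Finset.mem_of_mem_erase (hT ▸ hq)) hpq) (by rw [Finset.card_erase_of_mem hw, hn]; rfl)
    have hupd : ∀ v ∈ s.erase w, π v = Function.update π w u v := fun v hv ↦
      (Function.update_of_ne (Finset.ne_of_mem_erase hv) _ _).symm
    refine ⟨Function.update π w u, ?_, ?_⟩
    · rw [← Finset.insert_erase hw]
      refine .insert (Finset.notMem_erase w s) hwext ?_ (hπ.congr hupd)
      rw [Function.update_self, ← hT]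
      exact Finset.mem_erase.mpr ⟨huw, hu⟩
    · have h₁ := collapsePotential_mono hb Finset.subset_union_right hc hm
        (hsep w hw u hu huw.symm)
      have h₂ := collapsePotential_le_update (b := b) (δ := δ) hK hc hwT hu huw hsep'
      rw [hT] at h₂
      have hlog : ∑ v ∈ s.erase w, Real.log (dist v (π v))
          = ∑ v ∈ s.erase w, Real.log (dist v (Function.update π w u v)) :=
        Finset.sum_congr rfl fun v hv ↦ by rw [hupd v hv]
      rw [← Finset.add_sum_erase _ _ hw, Function.update_self, ← hlog]
      push_cast
      linarith

end Collapse

section Propagator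

variable {V X : Type*} [Fintype V] [MetricSpace X]

/-- The product of the propagators `dist (x u) (x w) ^ (-b u w)` over all ordered pairs of vertices;
an edge of a symmetric `b` thus contributes the exponent `-2 * b u w`. -/
noncomputable def propagatorProd (b : V → V → ℝ) (x : V → X) : ℝ :=
  ∏ u, ∏ w, dist (x u) (x w) ^ (-b u w)

variable {b : V → V → ℝ} {x : V → X}

theorem measurable_propagatorProd [MeasurableSpace X] [BorelSpace X] [SecondCountableTopology X]
    (b : V → V → ℝ) : Measurable (propagatorProd b : (V → X) → ℝ) := by
  unfold propagatorProd
  fun_prop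

theorem propagatorProd_eq_exp (hb : ∀ u, b u u = 0) (hx : x.Injective) :
    propagatorProd b x = Real.exp (-∑ u, ∑ w, b u w * Real.log (dist (x u) (x w))) := by
  simp only [propagatorProd, ← Finset.sum_neg_distrib, Real.exp_sum]
  congr! 2 with u _ w _
  rcases eq_or_ne u w with rfl | huw
  · simp [hb]
  · rw [Real.rpow_def_of_pos (dist_pos.mpr (hx.ne huw)), mul_neg, mul_comm]

theorem exists_isForest_propagatorProd_le [DecidableEq V] {ext : Finset V} {δ K : ℝ}
    (hb : ∀ u, b u u = 0) (hsub : IsSubcritical b ext δ) (hne : ext.Nonempty) (hK : 1 ≤ K)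
    (hdiam : ∀ p q : X, dist p q ≤ 1) (hx : x.Injective)
    (hext : ∀ p ∈ ext, ∀ q ∈ ext, p ≠ q → 1 ≤ K * dist (x p) (x q)) :
    ∃ π, IsForest ext π extᶜ ∧ propagatorProd b x
      ≤ Real.exp ((∑ u, ∑ w, |b u w|) * Real.log (K + 1) * (extᶜ.card + 1))
        * ∏ w ∈ extᶜ, dist (x w) (x (π w)) ^ (-δ) := by
  let := MetricSpace.induced x hx inferInstance
  obtain ⟨m, hm, hm₁, hmin⟩ := exists_pos_forall_ne_le_dist hx
  have hcover : extᶜ ∪ ext = Finset.univ := by rw [Finset.union_comm, Finset.union_compl]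
  obtain ⟨π, hπ, hle⟩ := exists_isForest_collapsePotential_le hsub hne hK
    (fun u w ↦ hdiam (x u) (x w)) hext extᶜ disjoint_compl_left id m
    ⟨by simp [hcover], fun _ ↦ rfl⟩ hm hm₁ (fun p _ q _ ↦ hmin p q)
  refine ⟨π, hπ, ?_⟩
  have hpot : collapsePotential b δ (extᶜ ∪ ext) id m
      = -∑ u, ∑ w, b u w * Real.log (dist (x u) (x w)) := by
    rw [collapsePotential, hcover, Finset.card_univ, sub_self, mul_zero, zero_mul, zero_sub]
    congr! 3 with u _ w _
    rcases eq_or_ne u w with rfl | huw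
    · simp [hb]
    · simp only [scaledLogDist, id, if_neg huw]; rfl
  have hforest : ∏ w ∈ extᶜ, dist (x w) (x (π w)) ^ (-δ)
      = Real.exp (-(δ * ∑ w ∈ extᶜ, Real.log (dist (x w) (x (π w))))) := by
    rw [Finset.mul_sum, ← Finset.sum_neg_distrib, Real.exp_sum]
    refine Finset.prod_congr rfl fun w hw ↦ ?_
    rw [Real.rpow_def_of_pos (dist_pos.mpr (hx.ne (hπ.parent_ne hw).symm)), mul_neg, mul_comm]
  rw [propagatorProd_eq_exp hb hx, hforest, ← Real.exp_add, ← sub_eq_add_neg, ← hpot]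
  exact Real.exp_le_exp.mpr hle

open Classical in
/-- The parent maps of the forests with roots in `root` that span the vertex set. -/
noncomputable def spanningForests [DecidableEq V] (root : Finset V) : Finset (V → V) :=
  Finset.univ.filter fun π ↦ IsForest root π rootᶜ

theorem mem_spanningForests [DecidableEq V] {root : Finset V} {π : V → V} :
    π ∈ spanningForests root ↔ IsForest root π rootᶜ := by
  simp [spanningForests]

theorem ofReal_propagatorProd_le_sum_spanningForests [DecidableEq V] {ext : Finset V} {δ K : ℝ}
    (hb : ∀ u, b u u = 0) (hsub : IsSubcritical b ext δ) (hne : ext.Nonempty) (hK : 1 ≤ K)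
    (hdiam : ∀ p q : X, dist p q ≤ 1) (hx : x.Injective)
    (hext : ∀ p ∈ ext, ∀ q ∈ ext, p ≠ q → 1 ≤ K * dist (x p) (x q)) :
    ENNReal.ofReal (propagatorProd b x)
      ≤ ENNReal.ofReal (Real.exp ((∑ u, ∑ w, |b u w|) * Real.log (K + 1) * (extᶜ.card + 1)))
        * ∑ π ∈ spanningForests ext,
          ∏ w ∈ extᶜ, ENNReal.ofReal (dist (x w) (x (π w)) ^ (-δ)) := by
  obtain ⟨π, hπ, hle⟩ := exists_isForest_propagatorProd_le hb hsub hne hK hdiam hx hext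
  have hmem : π ∈ spanningForests ext := mem_spanningForests.mpr hπ
  refine (ENNReal.ofReal_le_ofReal hle).trans ?_
  rw [ENNReal.ofReal_mul (Real.exp_nonneg _),
    ENNReal.ofReal_prod_of_nonneg fun _ _ ↦ by positivity]
  gcongr
  exact Finset.single_le_sum
    (f := fun π : V → V ↦ ∏ w ∈ extᶜ, ENNReal.ofReal (dist (x w) (x (π w)) ^ (-δ)))
    (fun _ _ ↦ zero_le) hmem

end Propagator

section Marginal

variable {V X : Type*} [DecidableEq V] [MeasurableSpace X] {μ : Measure X}

theorem lmarginal_const_mul (c : ℝ≥0∞) {f : (V → X) → ℝ≥0∞} (hf : Measurable f) (s : Finset V)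
    (x : V → X) :
    lmarginal (fun _ ↦ μ) s (fun x ↦ c * f x) x = c * lmarginal (fun _ ↦ μ) s f x :=
  lintegral_const_mul _ (hf.comp measurable_updateFinset)

theorem lmarginal_finsetSum {ι : Type*} (t : Finset ι) {f : ι → (V → X) → ℝ≥0∞}
    (hf : ∀ i ∈ t, Measurable (f i)) (s : Finset V) (x : V → X) :
    lmarginal (fun _ ↦ μ) s (fun x ↦ ∑ i ∈ t, f i x) x
      = ∑ i ∈ t, lmarginal (fun _ ↦ μ) s (f i) x :=
  lintegral_finsetSum _ fun i hi ↦ (hf i hi).comp measurable_updateFinset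

theorem lmarginal_le_lmarginal_of_injOn [Finite V] [SigmaFinite μ] [NullSingletonClass μ]
    {F G : (V → X) → ℝ≥0∞} (hF : Measurable F) (hG : Measurable G) {s t : Finset V} {x : V → X}
    (hx : Set.InjOn x (↑(s ∪ t))ᶜ)
    (hFG : ∀ y, (∀ i ∉ s, y i = x i) → Set.InjOn y (↑t)ᶜ → F y ≤ G y) :
    lmarginal (fun _ ↦ μ) s F x ≤ lmarginal (fun _ ↦ μ) s G x := by
  induction s using Finset.induction_on generalizing x with
  | empty =>
    rw [lmarginal_empty, lmarginal_empty]
    exact hFG x (fun _ _ ↦ rfl) (by simpa using hx)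
  | @insert i s hi ih =>
    rw [lmarginal_insert _ hF hi, lmarginal_insert _ hG hi]
    have hrange : ∀ᵐ z ∂μ, z ∉ Set.range x :=
      measure_eq_zero_iff_ae_notMem.mp ((Set.finite_range x).measure_zero μ)
    refine lintegral_mono_ae (hrange.mono fun z hz ↦ ih ?_ fun y hy ↦ hFG y fun j hj ↦ ?_)
    · have hz' (j : V) : x j ≠ z := fun h ↦ hz ⟨j, h⟩
      have hmem {j : V} (hj : j ∉ s ∪ t) (hji : j ≠ i) : j ∈ (↑(insert i s ∪ t) : Set V)ᶜ := by
        simpa [hji] using hj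
      intro j hj k hk hjk
      by_cases hji : j = i <;> by_cases hki : k = i
      · rw [hji, hki]
      · simp [hji, hki, (hz' k).symm] at hjk
      · simp [hji, hki, hz' j] at hjk
      · rw [Function.update_of_ne hji, Function.update_of_ne hki] at hjk
        exact hx (hmem hj hji) (hmem hk hki) hjk
    · rw [Finset.mem_insert, not_or] at hj
      rw [hy j hj.2, Function.update_of_ne hj.1]

theorem lmarginal_prod_le_of_isForest [SigmaFinite μ] {root s : Finset V} {π : V → V}
    (hπ : IsForest root π s) {k : X → X → ℝ≥0∞} (hk : Measurable (Function.uncurry k)) {M : ℝ≥0∞}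
    (hM : ∀ q, ∫⁻ p, k p q ∂μ ≤ M) (x : V → X) :
    lmarginal (fun _ ↦ μ) s (fun x ↦ ∏ w ∈ s, k (x w) (x (π w))) x ≤ M ^ s.card := by
  have hmeas (s : Finset V) : Measurable fun x : V → X ↦ ∏ w ∈ s, k (x w) (x (π w)) := by fun_prop
  induction hπ with
  | empty => simp
  | @insert w s hws hwr hpar hs ih =>
    have hwπ : π w ≠ w := (hs.insert hws hwr hpar).parent_ne (Finset.mem_insert_self w s)
    have hsplit (x : V → X) (z : X) :
        ∏ v ∈ insert w s, k (Function.update x w z v) (Function.update x w z (π v))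
          = k z (x (π w)) * ∏ v ∈ s, k (x v) (x (π v)) := by
      rw [Finset.prod_insert hws, Function.update_self, Function.update_of_ne hwπ]
      congr 1
      refine Finset.prod_congr rfl fun v hv ↦ ?_
      have hπv : π v ≠ w := fun h ↦ by
        have := hs.parent_mem hv
        simp [h, hws, hwr] at this
      rw [Function.update_of_ne (ne_of_mem_of_not_mem hv hws), Function.update_of_ne hπv]
    calc lmarginal (fun _ ↦ μ) (insert w s) (fun x ↦ ∏ v ∈ insert w s, k (x v) (x (π v))) x
        = lmarginal (fun _ ↦ μ) s
            (fun x ↦ (∫⁻ z, k z (x (π w)) ∂μ) * ∏ v ∈ s, k (x v) (x (π v))) x := by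
          rw [lmarginal_insert' _ (hmeas _) hws]
          congr 1
          ext x
          simp only [hsplit]
          exact lintegral_mul_const _ (by fun_prop)
      _ ≤ lmarginal (fun _ ↦ μ) s (fun x ↦ M * ∏ v ∈ s, k (x v) (x (π v))) x :=
          lmarginal_mono (fun x ↦ mul_le_mul_left (hM _) _) x
      _ ≤ M ^ (insert w s).card := by
          rw [Finset.card_insert_of_notMem hws, pow_succ', lmarginal_const_mul _ (hmeas s)]
          exact mul_le_mul_right ih _

end Marginal

section VolumeGrowth

variable {X : Type*} [MetricSpace X] [MeasurableSpace X]

/-- A measure on a metric space whose balls of radius `r` have volume comparable to `r ^ D`. The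
lower bound concerns small balls only, and its constant may depend on the centre. -/
structure HasVolumeGrowth (μ : Measure X) (D : ℝ) : Prop where
  upper : ∃ C, ∀ p, ∀ r > 0, μ (Metric.ball p r) ≤ ENNReal.ofReal (C * r ^ D)
  lower (p : X) : ∃ c > 0, ∀ r, 0 < r → r ≤ 1 →
    ENNReal.ofReal (c * r ^ D) ≤ μ (Metric.ball p r)

namespace HasVolumeGrowth

variable {μ : Measure X} {D : ℝ}

theorem isFiniteMeasure (hμ : HasVolumeGrowth μ D) (hdiam : ∀ p q : X, dist p q ≤ 1) :
    IsFiniteMeasure μ := by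
  obtain ⟨C, hC⟩ := hμ.upper
  rcases isEmpty_or_nonempty X with _ | ⟨⟨p⟩⟩
  · exact ⟨by simp [Measure.eq_zero_of_isEmpty μ]⟩
  · have huniv : Metric.ball p 2 = Set.univ :=
      Set.eq_univ_of_forall fun q ↦ (hdiam q p).trans_lt one_lt_two
    exact ⟨huniv ▸ (hC p 2 two_pos).trans_lt ENNReal.ofReal_lt_top⟩

theorem nullSingletonClass (hμ : HasVolumeGrowth μ D) (hD : 0 < D) : NullSingletonClass μ := by
  obtain ⟨C, hC⟩ := hμ.upper
  refine ⟨fun p ↦ le_antisymm ?_ zero_le⟩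
  have hlim : Filter.Tendsto (fun r : ℝ ↦ ENNReal.ofReal (C * r ^ D)) (𝓝[>] 0) (𝓝 0) := by
    have h := (((Real.continuousAt_rpow_const 0 D (Or.inr hD.le)).tendsto.const_mul C).mono_left
      (nhdsWithin_le_nhds (s := Set.Ioi 0)))
    simpa [Real.zero_rpow hD.ne'] using ENNReal.tendsto_ofReal h
  refine ge_of_tendsto hlim (eventually_mem_nhdsWithin.mono fun r hr ↦ ?_)
  exact (measure_mono (Set.singleton_subset_iff.mpr (Metric.mem_ball_self hr))).trans (hC p r hr)

theorem exists_lintegral_dist_rpow_neg_le [BorelSpace X] [SecondCountableTopology X]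
    (hμ : HasVolumeGrowth μ D) (hdiam : ∀ p q : X, dist p q ≤ 1) {δ : ℝ} (hδ : 0 < δ)
    (hδD : δ < D) :
    ∃ M < ⊤, ∀ q, ∫⁻ p, ENNReal.ofReal (dist p q ^ (-δ)) ∂μ ≤ M := by
  have := hμ.isFiniteMeasure hdiam
  obtain ⟨C, hC⟩ := hμ.upper
  have hsuper (q : X) {t : ℝ} (ht : 0 < t) :
      μ {p | t < dist p q ^ (-δ)} ≤ ENNReal.ofReal (C * t ^ (-(D / δ))) := by
    have hsub : {p | t < dist p q ^ (-δ)} ⊆ Metric.ball q (t ^ (-δ)⁻¹) := by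
      intro p hp
      rcases (dist_nonneg (x := p) (y := q)).eq_or_lt with h₀ | h₀
      · simp [← h₀, Real.zero_rpow (neg_ne_zero.mpr hδ.ne'), ht.not_gt] at hp
      · exact (Real.lt_rpow_inv_iff_of_neg h₀ ht (neg_lt_zero.mpr hδ)).mpr hp
    refine (measure_mono hsub).trans ((hC q _ (by positivity)).trans_eq ?_)
    rw [← Real.rpow_mul ht.le, inv_neg, neg_mul, inv_mul_eq_div]
  have hint : IntegrableOn (fun t : ℝ ↦ C * t ^ (-(D / δ))) (Set.Ioi 1) :=
    (integrableOn_Ioi_rpow_of_lt (neg_lt_neg ((one_lt_div hδ).mpr hδD)) one_pos).const_mul C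
  refine ⟨μ Set.univ + ∫⁻ t in Set.Ioi 1, ENNReal.ofReal (C * t ^ (-(D / δ))), ?_, fun q ↦ ?_⟩
  · exact ENNReal.add_lt_top.mpr ⟨measure_lt_top μ _, hint.lintegral_lt_top⟩
  · rw [lintegral_eq_lintegral_meas_lt μ (ae_of_all _ fun p ↦ by positivity) (by fun_prop),
      ← Set.Ioc_union_Ioi_eq_Ioi zero_le_one]
    refine (lintegral_union_le _ _ _).trans (add_le_add ?_ ?_)
    · exact (setLIntegral_mono measurable_const fun t _ ↦ measure_mono (Set.subset_univ _)).trans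
        (by simp)
    · exact setLIntegral_mono (by fun_prop) fun t ht ↦ hsuper q (one_pos.trans ht)

end HasVolumeGrowth

end VolumeGrowth

section Sufficiency

theorem exists_isSubcritical {V : Type*} [Finite V] [DecidableEq V] {b : V → V → ℝ}
    {ext : Finset V} {D : ℝ} (hD : 0 < D) (hdiag : ∀ u, b u u = 0)
    (hb : ∀ W : Finset V, 2 ≤ W.card → (W ∩ ext).card ≤ 1 →
      ∑ u ∈ W, ∑ w ∈ W, b u w < D * ((W.card : ℝ) - 1)) :
    ∃ δ, 0 < δ ∧ δ < D ∧ IsSubcritical b ext δ := by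
  have hev : ∀ᶠ δ in 𝓝[<] D, IsSubcritical b ext δ := by
    simp only [IsSubcritical, Filter.eventually_all]
    intro W hW hWext
    rcases hW.card_pos.nat_succ_le.eq_or_lt with h₁ | h₂
    · obtain ⟨v, rfl⟩ := Finset.card_eq_one.mp h₁.symm
      simp [hdiag]
    · have hlim : Filter.Tendsto (fun δ ↦ δ * ((W.card : ℝ) - 1)) (𝓝[<] D)
          (𝓝 (D * ((W.card : ℝ) - 1))) :=
        (Filter.tendsto_id.mul_const _).mono_left nhdsWithin_le_nhds
      exact (hlim.eventually_const_lt (hb W h₂ hWext)).mono fun δ hδ ↦ hδ.le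
  obtain ⟨δ, ⟨hδ₀, hδ⟩, hδD⟩ := (((lt_mem_nhds hD).filter_mono nhdsWithin_le_nhds).and hev
    |>.and self_mem_nhdsWithin).exists
  exact ⟨δ, hδ₀, hδD, hδ⟩

variable {V X : Type*} [Fintype V] [DecidableEq V] [MetricSpace X] [MeasurableSpace X]
  {b : V → V → ℝ} {ext : Finset V} {D : ℝ}

theorem lmarginal_propagatorProd_lt_top [BorelSpace X] [SecondCountableTopology X] {μ : Measure X}
    (hμ : HasVolumeGrowth μ D) (hD : 0 < D) (hdiam : ∀ p q : X, dist p q ≤ 1)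
    (hdiag : ∀ u, b u u = 0) (hne : ext.Nonempty)
    (hb : ∀ W : Finset V, 2 ≤ W.card → (W ∩ ext).card ≤ 1 →
      ∑ u ∈ W, ∑ w ∈ W, b u w < D * ((W.card : ℝ) - 1))
    {x : V → X} (hx : Set.InjOn x ext) :
    lmarginal (fun _ ↦ μ) extᶜ (fun x ↦ ENNReal.ofReal (propagatorProd b x)) x < ⊤ := by
  have := hμ.isFiniteMeasure hdiam
  have := hμ.nullSingletonClass hD
  obtain ⟨δ, hδ, hδD, hsub⟩ := exists_isSubcritical hD hdiag hb
  obtain ⟨M, hM, hkernel⟩ := hμ.exists_lintegral_dist_rpow_neg_le hdiam hδ hδD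
  obtain ⟨m, hm, hm₁, hext⟩ := exists_pos_forall_ne_le_dist (x := fun p : ext ↦ x p) hx.injective
  let k (p q : X) : ℝ≥0∞ := ENNReal.ofReal (dist p q ^ (-δ))
  let Q : ℝ := (∑ u, ∑ w, |b u w|) * Real.log (m⁻¹ + 1) * (extᶜ.card + 1)
  have hmeas : Measurable fun x : V → X ↦
      ∑ π ∈ spanningForests ext, ∏ w ∈ extᶜ, k (x w) (x (π w)) := by
    fun_prop
  calc lmarginal (fun _ ↦ μ) extᶜ (fun x ↦ ENNReal.ofReal (propagatorProd b x)) x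
      ≤ lmarginal (fun _ ↦ μ) extᶜ (fun x ↦ ENNReal.ofReal (Real.exp Q) *
          ∑ π ∈ spanningForests ext, ∏ w ∈ extᶜ, k (x w) (x (π w))) x := by
        refine lmarginal_le_lmarginal_of_injOn (t := ∅)
          (measurable_propagatorProd b).ennreal_ofReal (hmeas.const_mul _) (by simpa using hx)
          fun y hy hinj ↦ ?_
        refine ofReal_propagatorProd_le_sum_spanningForests hdiag hsub hne
          (one_le_inv₀ hm |>.mpr hm₁) hdiam (Set.injOn_univ.mp (by simpa using hinj))
          fun p hp q hq hpq ↦ ?_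
        rw [hy p (by simpa using hp), hy q (by simpa using hq), inv_mul_eq_div, one_le_div hm]
        exact hext ⟨p, hp⟩ ⟨q, hq⟩ (by simpa using hpq)
    _ = ENNReal.ofReal (Real.exp Q) * ∑ π ∈ spanningForests ext,
          lmarginal (fun _ ↦ μ) extᶜ (fun x ↦ ∏ w ∈ extᶜ, k (x w) (x (π w))) x := by
        rw [lmarginal_const_mul _ hmeas, lmarginal_finsetSum _ fun _ _ ↦ by fun_prop]
    _ ≤ ENNReal.ofReal (Real.exp Q) * ∑ _ ∈ spanningForests ext, M ^ extᶜ.card := by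
        gcongr with π hπ
        exact lmarginal_prod_le_of_isForest (mem_spanningForests.mp hπ) (by fun_prop) hkernel x
    _ < ⊤ := by simp [ENNReal.mul_lt_top, hM]

end Sufficiency

section Necessity

theorem le_propagatorProd {V X : Type*} [Fintype V] [MetricSpace X]
    {b : V → V → ℝ} {x : V → X} {T : Finset V} {K τ E : ℝ} (hdiag : ∀ u, b u u = 0)
    (hx : x.Injective) (hdiam : ∀ p q : X, dist p q ≤ 1) (hK : 1 ≤ K) (hτ : 0 < τ) (hτ₁ : τ ≤ 1)
    (hE : E ≤ ∑ u ∈ T, ∑ w ∈ T, b u w)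
    (hT : ∀ u ∈ T, ∀ w ∈ T, u ≠ w →
      dist (x u) (x w) ≤ K * τ ∧ τ ≤ K * dist (x u) (x w))
    (hT' : ∀ u w, u ≠ w → ¬(u ∈ T ∧ w ∈ T) → 1 ≤ K * dist (x u) (x w)) :
    Real.exp (-((∑ u, ∑ w, |b u w|) * Real.log K)) * τ ^ (-E) ≤ propagatorProd b x := by
  classical
  let g (u w : V) : ℝ := if u ∈ T ∧ w ∈ T then Real.log τ else 0
  let f (u w : V) : ℝ := if u = w then g u w else Real.log (dist (x u) (x w))
  have hfg (u w : V) : |f u w - g u w| ≤ Real.log K := by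
    simp only [f, g]
    split_ifs with huw hmem hmem
    · simpa using Real.log_nonneg hK
    · simpa using Real.log_nonneg hK
    · obtain ⟨h₁, h₂⟩ := hT u hmem.1 w hmem.2 huw
      exact abs_log_sub_log_le (dist_pos.mpr (hx.ne huw)) hτ h₁ h₂
    · have h := hdiam (x u) (x w)
      simpa using abs_log_sub_log_le (dist_pos.mpr (hx.ne huw)) one_pos (by linarith)
        (hT' u w huw hmem)
  have hf : ∑ u, ∑ w, b u w * f u w = ∑ u, ∑ w, b u w * Real.log (dist (x u) (x w)) := by
    congr! 2 with u _ w _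
    rcases eq_or_ne u w with rfl | huw
    · simp [hdiag]
    · simp [f, huw]
  have hg : ∑ u, ∑ w, b u w * g u w = (∑ u ∈ T, ∑ w ∈ T, b u w) * Real.log τ := by
    have hrow (u : V) : ∑ w, b u w * g u w
        = if u ∈ T then (∑ w ∈ T, b u w) * Real.log τ else 0 := by
      split_ifs with hu <;> simp [g, hu, Finset.sum_ite_mem, Finset.sum_mul]
    simp only [hrow, Finset.sum_ite_mem, Finset.univ_inter, Finset.sum_mul]
  have hle := (abs_le.mp (abs_sum_mul_sub_sum_mul_le (b := b) hfg)).2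
  have hEτ := mul_le_mul_of_nonpos_right hE (Real.log_nonpos hτ.le hτ₁)
  rw [propagatorProd_eq_exp hdiag hx, Real.rpow_def_of_pos hτ, ← Real.exp_add]
  exact Real.exp_le_exp.mpr (by linarith)

section Shell

variable {X : Type*} [MetricSpace X]

/-- The `j`-th shell of the geometric sequence of balls around `p` of radii `θ ^ j * r`. -/
def shell (p : X) (θ r : ℝ) (j : ℕ) : Set X :=
  Metric.ball p (θ ^ j * r) \ Metric.ball p (θ ^ (j + 1) * r)

variable {p y z : X} {θ r : ℝ} {i j : ℕ}

theorem mem_shell : y ∈ shell p θ r j ↔ dist y p < θ ^ j * r ∧ θ ^ (j + 1) * r ≤ dist y p := by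
  simp [shell]

theorem measurableSet_shell [MeasurableSpace X] [OpensMeasurableSpace X] :
    MeasurableSet (shell p θ r j) :=
  measurableSet_ball.diff measurableSet_ball

theorem disjoint_shell (hθ : 0 ≤ θ) (hθ₁ : θ ≤ 1) (hr : 0 ≤ r) (hij : i ≠ j) :
    Disjoint (shell p θ r i) (shell p θ r j) := by
  wlog h : i < j generalizing i j
  · exact (this hij.symm (hij.lt_or_gt.resolve_left h)).symm
  refine Set.disjoint_left.mpr fun y hi hj ↦ ?_
  have hpow : θ ^ j * r ≤ θ ^ (i + 1) * r := by
    gcongr ?_ * r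
    exact pow_le_pow_of_le_one hθ hθ₁ h
  exact (((mem_shell.mp hi).2.trans_lt (mem_shell.mp hj).1).trans_le hpow).false

theorem le_dist_of_mem_shell (hθ : 0 ≤ θ) (hθ₂ : θ ≤ 1 / 2) (hr : 0 ≤ r) (hij : i + 2 ≤ j)
    (hy : y ∈ shell p θ r i) (hz : z ∈ shell p θ r j) : θ ^ (i + 2) * r ≤ dist y z := by
  have hpow : θ ^ j * r ≤ θ ^ (i + 2) * r := by
    gcongr ?_ * r
    exact pow_le_pow_of_le_one hθ (by linarith) hij
  have hhalf : 2 * (θ ^ (i + 2) * r) ≤ θ ^ (i + 1) * r := by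
    have : 0 ≤ θ ^ (i + 1) * r := by positivity
    rw [pow_succ θ (i + 1)]
    nlinarith
  linarith [(mem_shell.mp hy).2, (mem_shell.mp hz).1, dist_triangle y z p]

variable {ι : Type*} [Fintype ι]

/-- The positions at scale `k` for a cluster `ι` at `p`, whose vertices sit in different,
non-adjacent shells; different scales use different shells. -/
def clusterRegion (ι : Type*) [Fintype ι] (p : X) (θ r : ℝ) (k : ℕ) : Set (ι → X) :=
  Set.univ.pi fun v ↦ shell p θ r (2 * (Fintype.card ι * k + Fintype.equivFin ι v))

theorem measurableSet_clusterRegion [MeasurableSpace X] [OpensMeasurableSpace X] {k : ℕ} :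
    MeasurableSet (clusterRegion ι p θ r k) :=
  MeasurableSet.univ_pi fun _ ↦ measurableSet_shell

theorem disjoint_clusterRegion [Nonempty ι] (hθ : 0 ≤ θ) (hθ₁ : θ ≤ 1) (hr : 0 ≤ r) {k l : ℕ}
    (hkl : k ≠ l) : Disjoint (clusterRegion ι p θ r k) (clusterRegion ι p θ r l) := by
  have v := Classical.arbitrary ι
  have hidx : 2 * (Fintype.card ι * k + Fintype.equivFin ι v)
      ≠ 2 * (Fintype.card ι * l + Fintype.equivFin ι v) := by
    simp [hkl, Fintype.card_ne_zero]
  exact Set.disjoint_univ_pi.mpr ⟨v, disjoint_shell hθ hθ₁ hr hidx⟩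

theorem dist_center_of_mem_clusterRegion (hθ : 0 ≤ θ) (hθ₁ : θ ≤ 1) (hr : 0 ≤ r) {k : ℕ}
    {y : ι → X} (hy : y ∈ clusterRegion ι p θ r k) (v : ι) :
    dist (y v) p ≤ θ ^ (2 * Fintype.card ι * k) * r ∧
      θ ^ (2 * Fintype.card ι) * (θ ^ (2 * Fintype.card ι * k) * r) ≤ dist (y v) p := by
  obtain ⟨h₁, h₂⟩ := mem_shell.mp (hy v (Set.mem_univ v))
  have hv := (Fintype.equivFin ι v).isLt
  constructor
  · refine h₁.le.trans ?_
    gcongr ?_ * r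
    exact pow_le_pow_of_le_one hθ hθ₁ (by linarith)
  · refine le_trans ?_ h₂
    rw [← mul_assoc, ← pow_add]
    gcongr ?_ * r
    exact pow_le_pow_of_le_one hθ hθ₁ (by linarith)

theorem le_dist_of_mem_clusterRegion (hθ : 0 ≤ θ) (hθ₂ : θ ≤ 1 / 2) (hr : 0 ≤ r) {k : ℕ}
    {y : ι → X} (hy : y ∈ clusterRegion ι p θ r k) {u v : ι} (huv : u ≠ v) :
    θ ^ (2 * Fintype.card ι) * (θ ^ (2 * Fintype.card ι * k) * r) ≤ dist (y u) (y v) := by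
  wlog h : Fintype.equivFin ι u < Fintype.equivFin ι v generalizing u v
  · rw [dist_comm]
    exact this huv.symm (((Fintype.equivFin ι).injective.ne huv).lt_or_gt.resolve_left h)
  have hlt : (Fintype.equivFin ι u : ℕ) < Fintype.equivFin ι v := h
  have hv := (Fintype.equivFin ι v).isLt
  refine le_trans ?_ (le_dist_of_mem_shell hθ hθ₂ hr (by linarith)
    (hy u (Set.mem_univ u)) (hy v (Set.mem_univ v)))
  rw [← mul_assoc, ← pow_add]
  gcongr ?_ * r
  exact pow_le_pow_of_le_one hθ (by linarith) (by linarith)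

end Shell

section Measure

variable {X : Type*} [MetricSpace X] [MeasurableSpace X] {μ : Measure X} {D : ℝ}

theorem HasVolumeGrowth.exists_shell (hμ : HasVolumeGrowth μ D) (hD : 0 < D) (p : X) :
    ∃ θ > 0, θ ≤ 1 / 2 ∧ ∃ c > 0, ∀ r, 0 < r → r ≤ 1 → ∀ j,
      ENNReal.ofReal (c * (θ ^ j * r) ^ D) ≤ μ (shell p θ r j) := by
  obtain ⟨C, hupper⟩ := hμ.upper
  obtain ⟨c, hc, hlower⟩ := hμ.lower p
  have hlim : Filter.Tendsto (fun θ : ℝ ↦ C * θ ^ D) (𝓝[>] 0) (𝓝 0) := by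
    have h := (((Real.continuousAt_rpow_const 0 D (Or.inr hD.le)).tendsto.const_mul C).mono_left
      (nhdsWithin_le_nhds (s := Set.Ioi 0)))
    simpa [Real.zero_rpow hD.ne'] using h
  obtain ⟨θ, ⟨hθ, hθC⟩, hθ₂⟩ := ((eventually_mem_nhdsWithin.and
    (hlim.eventually_lt_const (half_pos hc))).and
    ((eventually_le_nhds one_half_pos).filter_mono nhdsWithin_le_nhds)).exists
  have hθ : 0 < θ := hθ
  refine ⟨θ, hθ, hθ₂, c / 2, half_pos hc, fun r hr hr₁ j ↦ ?_⟩
  set R := θ ^ j * r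
  have hR : 0 < R := by positivity
  have hR₁ : R ≤ 1 := mul_le_one₀ (pow_le_one₀ hθ.le (by linarith)) hr.le hr₁
  have hinner : μ (Metric.ball p (θ ^ (j + 1) * r)) ≤ ENNReal.ofReal (c / 2 * R ^ D) := by
    have hrad : θ ^ (j + 1) * r = θ * R := by rw [pow_succ']; ring
    refine (hupper p _ (by positivity)).trans (ENNReal.ofReal_le_ofReal ?_)
    rw [hrad, Real.mul_rpow hθ.le hR.le, ← mul_assoc]
    gcongr
  calc ENNReal.ofReal (c / 2 * R ^ D)
      = ENNReal.ofReal (c * R ^ D) - ENNReal.ofReal (c / 2 * R ^ D) := by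
        rw [← ENNReal.ofReal_sub _ (by positivity)]
        congr 1
        ring
    _ ≤ μ (Metric.ball p R) - μ (Metric.ball p (θ ^ (j + 1) * r)) :=
        tsub_le_tsub (hlower R hR hR₁) hinner
    _ ≤ μ (shell p θ r j) := le_measure_sdiff

theorem ofReal_pow_le_pi_clusterRegion [SigmaFinite μ] {ι : Type*} [Fintype ι] {p : X}
    {θ r c : ℝ} (hθ : 0 ≤ θ) (hθ₁ : θ ≤ 1) (hr : 0 ≤ r) (hc : 0 ≤ c) (hD : 0 ≤ D)
    (hshell : ∀ j, ENNReal.ofReal (c * (θ ^ j * r) ^ D) ≤ μ (shell p θ r j)) (k : ℕ) :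
    ENNReal.ofReal (c * (θ ^ (2 * Fintype.card ι) * (θ ^ (2 * Fintype.card ι * k) * r)) ^ D)
      ^ Fintype.card ι ≤ Measure.pi (fun _ : ι ↦ μ) (clusterRegion ι p θ r k) := by
  rw [clusterRegion, Measure.pi_pi]
  refine (Finset.prod_const _).symm.trans_le (Finset.prod_le_prod' fun v _ ↦ ?_)
  refine (ENNReal.ofReal_le_ofReal ?_).trans (hshell _)
  have hv := (Fintype.equivFin ι v).isLt
  rw [← mul_assoc, ← pow_add]
  gcongr c * (?_ * r) ^ D
  exact pow_le_pow_of_le_one hθ hθ₁ (by linarith)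

end Measure

theorem lintegral_eq_top_of_forall_le_setLIntegral {α : Type*} [MeasurableSpace α] {μ : Measure α}
    {f : α → ℝ≥0∞} {A : ℕ → Set α} {ε : ℝ≥0∞} (hA : ∀ k, MeasurableSet (A k))
    (hdisj : Pairwise (Function.onFun Disjoint A)) (hε : ε ≠ 0)
    (hf : ∀ k, ε ≤ ∫⁻ a in A k, f a ∂μ) : ∫⁻ a, f a ∂μ = ⊤ := by
  refine top_unique ?_
  calc ⊤ = ∑' _ : ℕ, ε := (ENNReal.tsum_const_eq_top_of_ne_zero hε).symm
    _ ≤ ∑' k, ∫⁻ a in A k, f a ∂μ := ENNReal.tsum_le_tsum hf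
    _ = ∫⁻ a in ⋃ k, A k, f a ∂μ := (lintegral_iUnion hA hdisj f).symm
    _ ≤ ∫⁻ a, f a ∂μ := setLIntegral_le_lintegral _ f

section Cluster

variable {V X : Type*} [DecidableEq V] [MetricSpace X] {x : V → X} {S : Finset V} {p : V}
  {θ r : ℝ} {k : ℕ} {y : S → X}

theorem dist_updateFinset_of_mem_insert (hp : p ∉ S) (hθ : 0 ≤ θ) (hθ₂ : θ ≤ 1 / 2) (hr : 0 ≤ r)
    (hy : y ∈ clusterRegion S (x p) θ r k) {u w : V} (hu : u ∈ insert p S) (hw : w ∈ insert p S)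
    (huw : u ≠ w) :
    dist (Function.updateFinset x S y u) (Function.updateFinset x S y w)
        ≤ 2 * (θ ^ (2 * Fintype.card S * k) * r) ∧
      θ ^ (2 * Fintype.card S) * (θ ^ (2 * Fintype.card S * k) * r)
        ≤ dist (Function.updateFinset x S y u) (Function.updateFinset x S y w) := by
  have hτ : 0 ≤ θ ^ (2 * Fintype.card S * k) * r := by positivity
  have hcenter := dist_center_of_mem_clusterRegion hθ (by linarith) hr hy
  rcases Finset.mem_insert.mp hu with rfl | huS <;> rcases Finset.mem_insert.mp hw with rfl | hwS
  · exact absurd rfl huw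
  · obtain ⟨h₁, h₂⟩ := hcenter ⟨w, hwS⟩
    simp only [Function.updateFinset, hp, hwS, dif_neg, dif_pos, not_false_eq_true, dist_comm (x u)]
    exact ⟨by linarith, h₂⟩
  · obtain ⟨h₁, h₂⟩ := hcenter ⟨u, huS⟩
    simp only [Function.updateFinset, hp, huS, dif_neg, dif_pos, not_false_eq_true]
    exact ⟨by linarith, h₂⟩
  · simp only [Function.updateFinset, huS, hwS, dif_pos]
    refine ⟨?_, le_dist_of_mem_clusterRegion hθ hθ₂ hr hy (by simpa using huw)⟩
    linarith [(hcenter ⟨u, huS⟩).1, (hcenter ⟨w, hwS⟩).1,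
      dist_triangle_right (y ⟨u, huS⟩) (y ⟨w, hwS⟩) (x p)]

theorem le_dist_updateFinset_of_notMem_insert (hp : p ∉ S) (hθ : 0 ≤ θ) (hθ₁ : θ ≤ 1) (hr : 0 ≤ r)
    (hx : ∀ u ∉ S, ∀ w ∉ S, u ≠ w → 2 * r ≤ dist (x u) (x w))
    (hy : y ∈ clusterRegion S (x p) θ r k) {u w : V} (hw : w ∉ insert p S) (huw : u ≠ w) :
    r ≤ dist (Function.updateFinset x S y u) (Function.updateFinset x S y w) := by
  obtain ⟨hwp, hwS⟩ := not_or.mp (mt Finset.mem_insert.mpr hw)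
  by_cases huS : u ∈ S
  · have hτ : θ ^ (2 * Fintype.card S * k) * r ≤ r :=
      mul_le_of_le_one_left hr (pow_le_one₀ hθ hθ₁)
    simp only [Function.updateFinset, huS, hwS, dif_neg, dif_pos, not_false_eq_true]
    linarith [(dist_center_of_mem_clusterRegion hθ hθ₁ hr hy ⟨u, huS⟩).1,
      hx p hp w hwS (Ne.symm hwp), dist_triangle_left (x p) (x w) (y ⟨u, huS⟩)]
  · simp only [Function.updateFinset, huS, hwS, dif_neg, not_false_eq_true]
    linarith [hx u huS w hwS huw]

theorem le_propagatorProd_updateFinset [Fintype V] {b : V → V → ℝ} {E : ℝ}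
    (hdiag : ∀ u, b u u = 0) (hdiam : ∀ p q : X, dist p q ≤ 1) (hp : p ∉ S)
    (hE : E ≤ ∑ u ∈ insert p S, ∑ w ∈ insert p S, b u w)
    (hθ : 0 < θ) (hθ₂ : θ ≤ 1 / 2) (hr : 0 < r) (hr₁ : r ≤ 1)
    (hx : ∀ u ∉ S, ∀ w ∉ S, u ≠ w → 2 * r ≤ dist (x u) (x w))
    (hy : y ∈ clusterRegion S (x p) θ r k) :
    Real.exp (-((∑ u, ∑ w, |b u w|) * Real.log (2 / (r * θ ^ (2 * Fintype.card S)))))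
        * (θ ^ (2 * Fintype.card S * k) * r) ^ (-E)
      ≤ propagatorProd b (Function.updateFinset x S y) := by
  set κ := θ ^ (2 * Fintype.card S)
  set τ := θ ^ (2 * Fintype.card S * k) * r
  have hκ : 0 < κ := by positivity
  have hτ : 0 < τ := by positivity
  have hκ₁ : κ ≤ 1 := pow_le_one₀ hθ.le (by linarith)
  have hτ₁ : τ ≤ 1 := mul_le_one₀ (pow_le_one₀ hθ.le (by linarith)) hr.le hr₁
  have hrκ : r * κ ≤ 1 := mul_le_one₀ hr₁ hκ.le hκ₁
  have hnear {u w : V} (hu : u ∈ insert p S) (hw : w ∈ insert p S) (huw : u ≠ w) :=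
    dist_updateFinset_of_mem_insert hp hθ.le hθ₂ hr.le hy hu hw huw
  have hfar {u w : V} (huw : u ≠ w) (hmem : ¬(u ∈ insert p S ∧ w ∈ insert p S)) :
      r ≤ dist (Function.updateFinset x S y u) (Function.updateFinset x S y w) := by
    rcases not_and_or.mp hmem with hu | hw
    · rw [dist_comm]
      exact le_dist_updateFinset_of_notMem_insert hp hθ.le (by linarith) hr.le hx hy hu huw.symm
    · exact le_dist_updateFinset_of_notMem_insert hp hθ.le (by linarith) hr.le hx hy hw huw
  have hinj : (Function.updateFinset x S y).Injective := by
    refine fun u w h ↦ by_contra fun huw ↦ ?_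
    have hpos : 0 < dist (Function.updateFinset x S y u) (Function.updateFinset x S y w) := by
      by_cases hmem : u ∈ insert p S ∧ w ∈ insert p S
      · exact (mul_pos hκ hτ).trans_le (hnear hmem.1 hmem.2 huw).2
      · exact hr.trans_le (hfar huw hmem)
    exact hpos.ne' (dist_eq_zero.mpr h)
  refine le_propagatorProd hdiag hinj hdiam ?_ hτ hτ₁ hE (fun u hu w hw huw ↦ ?_)
    fun u w huw hmem ↦ ?_
  · rw [le_div_iff₀ (by positivity)]
    linarith
  · obtain ⟨h₁, h₂⟩ := hnear hu hw huw
    constructor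
    · refine h₁.trans (mul_le_mul_of_nonneg_right ?_ hτ.le)
      rw [le_div_iff₀ (by positivity)]
      linarith
    · rw [div_mul_eq_mul_div, le_div_iff₀ (by positivity)]
      nlinarith [mul_le_mul_of_nonneg_right hr₁ (mul_pos hκ hτ).le]
  · rw [div_mul_eq_mul_div, le_div_iff₀ (by positivity)]
    nlinarith [hfar huw hmem]

end Cluster

theorem lmarginal_propagatorProd_eq_top_of_notMem {V X : Type*} [Fintype V] [DecidableEq V]
    [MetricSpace X] [MeasurableSpace X] [OpensMeasurableSpace X] {μ : Measure X} [SigmaFinite μ]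
    {b : V → V → ℝ} {D : ℝ} (hμ : HasVolumeGrowth μ D) (hD : 0 < D)
    (hdiam : ∀ p q : X, dist p q ≤ 1) (hdiag : ∀ u, b u u = 0) {S : Finset V} {p : V}
    (hne : S.Nonempty) (hp : p ∉ S)
    (hb : D * S.card ≤ ∑ u ∈ insert p S, ∑ w ∈ insert p S, b u w)
    {x : V → X} (hx : Set.InjOn x (↑S)ᶜ) :
    lmarginal (fun _ ↦ μ) S (fun x ↦ ENNReal.ofReal (propagatorProd b x)) x = ⊤ := by
  obtain ⟨m, hm, hm₁, hmin⟩ := exists_pos_forall_ne_le_dist (x := (↑S : Set V)ᶜ.domRestrict x)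
    hx.injective
  obtain ⟨θ, hθ, hθ₂, c, hc, hshell⟩ := hμ.exists_shell hD (x p)
  have : Nonempty S := hne.to_subtype
  have hm₂ : 0 < m / 2 := half_pos hm
  have hsep (u) (hu : u ∉ S) (w) (hw : w ∉ S) (huw : u ≠ w) : 2 * (m / 2) ≤ dist (x u) (x w) := by
    rw [mul_div_cancel₀ _ two_ne_zero]
    exact hmin ⟨u, hu⟩ ⟨w, hw⟩ (by simpa using huw)
  set κ := θ ^ (2 * Fintype.card S)
  set A := Real.exp (-((∑ u, ∑ w, |b u w|) * Real.log (2 / (m / 2 * κ))))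
  have hκ : 0 < κ := by positivity
  have : 0 < A := Real.exp_pos _
  rw [lmarginal]
  refine lintegral_eq_top_of_forall_le_setLIntegral
    (A := clusterRegion S (x p) θ (m / 2)) (ε := ENNReal.ofReal (A * (c * κ ^ D) ^ Fintype.card S))
    (fun _ ↦ measurableSet_clusterRegion)
    (fun _ _ ↦ disjoint_clusterRegion hθ.le (by linarith) hm₂.le)
    (ENNReal.ofReal_pos.mpr (by positivity)).ne' fun k ↦ ?_
  set τ := θ ^ (2 * Fintype.card S * k) * (m / 2)
  have hτ : 0 < τ := by positivity
  have hcancel : A * (c * κ ^ D) ^ Fintype.card S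
      = A * τ ^ (-(D * S.card)) * (c * (κ * τ) ^ D) ^ Fintype.card S := by
    rw [Real.mul_rpow hκ.le hτ.le, ← mul_assoc c, mul_pow (c * κ ^ D), Fintype.card_coe,
      ← Real.rpow_mul_natCast hτ.le, mul_mul_mul_comm, Real.rpow_neg hτ.le,
      inv_mul_cancel₀ (by positivity), mul_one]
  calc ENNReal.ofReal (A * (c * κ ^ D) ^ Fintype.card S)
      = ENNReal.ofReal (A * τ ^ (-(D * S.card)))
        * ENNReal.ofReal (c * (κ * τ) ^ D) ^ Fintype.card S := by
        rw [hcancel, ENNReal.ofReal_mul (by positivity), ENNReal.ofReal_pow (by positivity)]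
    _ ≤ ENNReal.ofReal (A * τ ^ (-(D * S.card)))
        * Measure.pi (fun _ ↦ μ) (clusterRegion S (x p) θ (m / 2) k) := by
        gcongr
        exact ofReal_pow_le_pi_clusterRegion hθ.le (by linarith) hm₂.le hc.le hD.le
          (hshell _ hm₂ (by linarith)) k
    _ = ∫⁻ _ in clusterRegion S (x p) θ (m / 2) k, ENNReal.ofReal (A * τ ^ (-(D * S.card)))
        ∂Measure.pi (fun _ ↦ μ) := (setLIntegral_const _ _).symm
    _ ≤ _ := setLIntegral_mono' measurableSet_clusterRegion fun y hy ↦ by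
        gcongr
        exact le_propagatorProd_updateFinset hdiag hdiam hp hb hθ hθ₂ hm₂ (by linarith) hsep hy

theorem lmarginal_propagatorProd_eq_top {V X : Type*} [Fintype V] [DecidableEq V] [MetricSpace X]
    [MeasurableSpace X] [BorelSpace X] [SecondCountableTopology X] {μ : Measure X}
    {b : V → V → ℝ} {D : ℝ} (hμ : HasVolumeGrowth μ D) (hD : 0 < D)
    (hdiam : ∀ p q : X, dist p q ≤ 1) (hdiag : ∀ u, b u u = 0) {ext W : Finset V}
    (hW : 2 ≤ W.card) (hWext : (W ∩ ext).card ≤ 1)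
    (hb : D * ((W.card : ℝ) - 1) ≤ ∑ u ∈ W, ∑ w ∈ W, b u w) {x : V → X} (hx : Set.InjOn x ext) :
    lmarginal (fun _ ↦ μ) extᶜ (fun x ↦ ENNReal.ofReal (propagatorProd b x)) x = ⊤ := by
  have := hμ.isFiniteMeasure hdiam
  have := hμ.nullSingletonClass hD
  have hF := (measurable_propagatorProd (X := X) b).ennreal_ofReal
  obtain ⟨p, hpW, hp⟩ : ∃ p ∈ W, W ∩ ext ⊆ {p} := by
    rcases (W ∩ ext).eq_empty_or_nonempty with h | ⟨p, hp⟩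
    · obtain ⟨p, hp⟩ := Finset.card_pos.mp (two_pos.trans_le hW)
      exact ⟨p, hp, by simp [h]⟩
    · exact ⟨p, Finset.mem_of_mem_inter_left hp,
        fun q hq ↦ Finset.mem_singleton.mpr (Finset.card_le_one.mp hWext q hq p hp)⟩
  set S := W.erase p
  have hS : S ⊆ extᶜ := fun v hv ↦ Finset.mem_compl.mpr fun hvext ↦ (Finset.mem_erase.mp hv).1
    (Finset.mem_singleton.mp (hp (Finset.mem_inter.mpr ⟨(Finset.mem_erase.mp hv).2, hvext⟩)))
  have hcard : S.card + 1 = W.card := Finset.card_erase_add_one hpW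
  have hinsert : insert p S = W := Finset.insert_erase hpW
  have hne : S.Nonempty := Finset.card_pos.mp (by lia)
  have hbS : D * S.card ≤ ∑ u ∈ insert p S, ∑ w ∈ insert p S, b u w := by
    rwa [hinsert, eq_sub_of_add_eq (by exact_mod_cast hcard : (S.card : ℝ) + 1 = W.card)]
  have hμ₀ : Measure.pi (fun _ : ↥(extᶜ \ S) ↦ μ) Set.univ ≠ 0 := by
    obtain ⟨c, hc, hlower⟩ := hμ.lower (x p)
    have hball : 0 < μ (Metric.ball (x p) 1) :=
      (ENNReal.ofReal_pos.mpr (by simpa using hc)).trans_le (hlower 1 one_pos le_rfl)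
    have huniv : μ Set.univ ≠ 0 := (hball.trans_le (measure_mono (Set.subset_univ _))).ne'
    simp [Measure.pi_univ, huniv]
  refine top_unique ?_
  calc (⊤ : ℝ≥0∞) = lmarginal (fun _ ↦ μ) (extᶜ \ S) (fun _ ↦ ⊤) x := by
        rw [lmarginal, lintegral_const, ENNReal.top_mul hμ₀]
    _ ≤ lmarginal (fun _ ↦ μ) (extᶜ \ S)
          (lmarginal (fun _ ↦ μ) S fun x ↦ ENNReal.ofReal (propagatorProd b x)) x := by
        refine lmarginal_le_lmarginal_of_injOn (t := S) measurable_const (hF.lmarginal _)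
          (by simpa [Finset.sdiff_union_of_subset hS] using hx) fun y _ hinj ↦ ?_
        exact (lmarginal_propagatorProd_eq_top_of_notMem hμ hD hdiam hdiag hne
          (Finset.notMem_erase p W) hbS hinj).ge
    _ = lmarginal (fun _ ↦ μ) extᶜ (fun x ↦ ENNReal.ofReal (propagatorProd b x)) x := by
        rw [← lmarginal_union _ _ hF Finset.sdiff_disjoint, Finset.sdiff_union_of_subset hS]

end Necessity

section ChordalSphere

section Bracket

variable {E : Type*} [NormedAddCommGroup E]

/-- The Japanese bracket `√(1 + ‖x‖ ^ 2)`, the reciprocal of the conformal factor of stereographic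
projection. -/
noncomputable def bracket (x : E) : ℝ := √(1 + ‖x‖ ^ 2)

theorem sq_bracket (x : E) : bracket x ^ 2 = 1 + ‖x‖ ^ 2 := Real.sq_sqrt (by positivity)

theorem one_le_bracket (x : E) : 1 ≤ bracket x :=
  Real.one_le_sqrt.mpr (le_add_of_nonneg_right (by positivity))

theorem bracket_pos (x : E) : 0 < bracket x := one_pos.trans_le (one_le_bracket x)

theorem norm_le_bracket (x : E) : ‖x‖ ≤ bracket x :=
  Real.le_sqrt_of_sq_le (le_add_of_nonneg_left zero_le_one)

theorem bracket_le_one_add_norm (x : E) : bracket x ≤ 1 + ‖x‖ := sqrt_one_add_norm_sq_le x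

@[fun_prop]
theorem continuous_bracket : Continuous (bracket : E → ℝ) := by
  unfold bracket
  fun_prop

end Bracket

/-- The one-point compactification of an inner product space, carrying the chordal metric of the
sphere of diameter one onto which it is stereographically projected. -/
inductive ChordalSphere (E : Type*)
  | infty
  | point (x : E)

namespace ChordalSphere

variable {E : Type*} [NormedAddCommGroup E]

/-- The affine embedding of `E` as the hyperplane at height one, whose inversion is the sphere. -/
def lift (x : E) : WithLp 2 (E × ℝ) := WithLp.toLp 2 (x, 1)

theorem norm_lift (x : E) : ‖lift x‖ = bracket x := by
  simp [WithLp.prod_norm_eq_of_L2, lift, bracket, add_comm]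

theorem dist_lift (x y : E) : dist (lift x) (lift y) = ‖x - y‖ := by
  simp [dist_eq_norm, WithLp.prod_norm_eq_of_L2, lift]

theorem lift_ne_zero (x : E) : lift x ≠ 0 :=
  norm_ne_zero_iff.mp (norm_lift x ▸ (bracket_pos x).ne')

theorem bracket_le_bracket_add_norm_sub (x y : E) : bracket x ≤ bracket y + ‖x - y‖ := by
  rw [← norm_lift, ← norm_lift, ← dist_lift, dist_eq_norm]
  exact norm_le_norm_add_norm_sub' (lift x) (lift y)

variable [InnerProductSpace ℝ E]

/-- Stereographic projection, as the inversion of the hyperplane at height one. -/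
noncomputable def embed : ChordalSphere E → WithLp 2 (E × ℝ)
  | infty => 0
  | point x => (1 / ‖lift x‖) ^ 2 • lift x

theorem norm_embed_point (x : E) : ‖embed (point x)‖ = (bracket x)⁻¹ := by
  have := bracket_pos x
  rw [embed, norm_smul, norm_lift, Real.norm_of_nonneg (by positivity)]
  field_simp

theorem dist_embed_point (x y : E) :
    dist (embed (point x)) (embed (point y)) = ‖x - y‖ / (bracket x * bracket y) := by
  rw [embed, embed, dist_div_norm_sq_smul (lift_ne_zero x) (lift_ne_zero y), norm_lift, norm_lift,
    dist_lift, one_pow, one_div_mul_eq_div]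

theorem embed_injective : (embed : ChordalSphere E → WithLp 2 (E × ℝ)).Injective := by
  have hne (x : E) : embed (point x) ≠ embed infty :=
    norm_ne_zero_iff.mp (norm_embed_point x ▸ (inv_pos.mpr (bracket_pos x)).ne')
  rintro (_ | x) (_ | y) h
  · rfl
  · exact absurd h.symm (hne y)
  · exact absurd h (hne x)
  · have hxy := dist_embed_point x y
    rw [h, dist_self, eq_comm, div_eq_zero_iff, norm_sub_eq_zero_iff] at hxy
    exact congrArg point (hxy.resolve_right (mul_pos (bracket_pos x) (bracket_pos y)).ne')

noncomputable instance : MetricSpace (ChordalSphere E) :=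
  MetricSpace.induced embed embed_injective inferInstance

theorem isEmbedding_embed : Topology.IsEmbedding (embed : ChordalSphere E → WithLp 2 (E × ℝ)) :=
  ⟨⟨rfl⟩, embed_injective⟩

instance [SecondCountableTopology E] : SecondCountableTopology (ChordalSphere E) :=
  isEmbedding_embed.secondCountableTopology

noncomputable instance : MeasurableSpace (ChordalSphere E) := borel _

instance : BorelSpace (ChordalSphere E) := ⟨rfl⟩

theorem dist_point_point (x y : E) :
    dist (point x) (point y) = ‖x - y‖ / (bracket x * bracket y) :=
  dist_embed_point x y

theorem dist_point_infty (x : E) : dist (point x) infty = (bracket x)⁻¹ :=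
  (dist_zero_right _).trans (norm_embed_point x)

theorem dist_infty_point (x : E) : dist infty (point x) = (bracket x)⁻¹ := by
  rw [dist_comm, dist_point_infty]

theorem dist_le_one (p q : ChordalSphere E) : dist p q ≤ 1 := by
  match p, q with
  | infty, infty => simp
  | infty, point y => exact dist_infty_point y ▸ inv_le_one_of_one_le₀ (one_le_bracket y)
  | point x, infty => exact dist_point_infty x ▸ inv_le_one_of_one_le₀ (one_le_bracket x)
  | point x, point y =>
    have hx := bracket_pos x
    have hy := bracket_pos y
    rw [dist_point_point, div_le_one (by positivity)]
    refine (norm_sub_le x y).trans (le_of_sq_le_sq ?_ (by positivity))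
    rw [mul_pow, sq_bracket, sq_bracket]
    nlinarith [sq_nonneg (‖x‖ * ‖y‖ - 1)]

theorem dist_point_point_le (x y : E) : dist (point x) (point y) ≤ ‖x - y‖ := by
  rw [dist_point_point]
  exact div_le_self (norm_nonneg _)
    (one_le_mul_of_one_le_of_one_le (one_le_bracket x) (one_le_bracket y))

theorem continuous_point : Continuous (point : E → ChordalSphere E) :=
  LipschitzWith.continuous (K := 1) <| LipschitzWith.of_dist_le_mul fun x y ↦ by
    simpa [dist_eq_norm] using dist_point_point_le x y

variable [MeasurableSpace E] [BorelSpace E]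

@[fun_prop]
theorem measurable_point : Measurable (point : E → ChordalSphere E) := continuous_point.measurable

variable {μ : Measure E}

/-- The push-forward of `μ` along the point map, with the conformal density which for Lebesgue
measure yields the surface measure of the sphere. -/
noncomputable def chordalMeasure (μ : Measure E) : Measure (ChordalSphere E) :=
  (μ.withDensity fun x ↦ ENNReal.ofReal (bracket x ^ (2 * Module.finrank ℝ E))⁻¹).map point

theorem chordalMeasure_apply {s : Set (ChordalSphere E)} (hs : MeasurableSet s) :
    chordalMeasure μ s = ∫⁻ x in point ⁻¹' s,
      ENNReal.ofReal (bracket x ^ (2 * Module.finrank ℝ E))⁻¹ ∂μ := by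
  rw [chordalMeasure, Measure.map_apply measurable_point hs,
    withDensity_apply _ (measurable_point hs)]

theorem lintegral_chordalMeasure {f : ChordalSphere E → ℝ≥0∞} (hf : Measurable f) :
    ∫⁻ p, f p ∂chordalMeasure μ
      = ∫⁻ x, ENNReal.ofReal (bracket x ^ (2 * Module.finrank ℝ E))⁻¹ * f (point x) ∂μ := by
  rw [chordalMeasure, lintegral_map hf measurable_point,
    lintegral_withDensity_eq_lintegral_mul _ (by fun_prop) (by fun_prop)]
  rfl

variable [FiniteDimensional ℝ E] [μ.IsAddHaarMeasure]

theorem chordalMeasure_le {s : Set (ChordalSphere E)} (hs : MeasurableSet s) {c : E} {m ρ : ℝ}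
    (hm : 0 < m) (hρ : 0 < ρ) (h : ∀ x, point x ∈ s → ‖x - c‖ < ρ ∧ m ≤ bracket x) :
    chordalMeasure μ s ≤ ENNReal.ofReal
      ((m ^ (2 * Module.finrank ℝ E))⁻¹ * ρ ^ Module.finrank ℝ E * μ.real (Metric.ball 0 1)) := by
  have hsub : point ⁻¹' s ⊆ Metric.ball c ρ := fun x hx ↦ mem_ball_iff_norm.mpr (h x hx).1
  calc chordalMeasure μ s
      ≤ ∫⁻ _ in point ⁻¹' s, ENNReal.ofReal (m ^ (2 * Module.finrank ℝ E))⁻¹ ∂μ := by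
        rw [chordalMeasure_apply hs]
        refine setLIntegral_mono measurable_const fun x hx ↦ ENNReal.ofReal_le_ofReal ?_
        gcongr
        exact (h x hx).2
    _ ≤ ENNReal.ofReal (m ^ (2 * Module.finrank ℝ E))⁻¹ * μ (Metric.ball c ρ) := by
        rw [setLIntegral_const]
        gcongr
    _ = _ := by
        rw [Measure.addHaar_ball_of_pos μ c hρ, ← ofReal_measureReal (measure_ball_lt_top.ne),
          ← ENNReal.ofReal_mul (by positivity), ← ENNReal.ofReal_mul (by positivity), mul_assoc]

theorem le_chordalMeasure {s : Set (ChordalSphere E)} (hs : MeasurableSet s) {c : E} {m ρ : ℝ}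
    (hρ : 0 < ρ) (h : ∀ x, ‖x - c‖ < ρ → point x ∈ s ∧ bracket x ≤ m) :
    ENNReal.ofReal
      ((m ^ (2 * Module.finrank ℝ E))⁻¹ * ρ ^ Module.finrank ℝ E * μ.real (Metric.ball 0 1))
      ≤ chordalMeasure μ s := by
  have hm : 0 < m := (bracket_pos c).trans_le (h c (by simpa)).2
  have hsub : Metric.ball c ρ ⊆ point ⁻¹' s := fun x hx ↦ (h x (mem_ball_iff_norm.mp hx)).1
  calc _ = ENNReal.ofReal (m ^ (2 * Module.finrank ℝ E))⁻¹ * μ (Metric.ball c ρ) := by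
        rw [Measure.addHaar_ball_of_pos μ c hρ, ← ofReal_measureReal (measure_ball_lt_top.ne),
          ← ENNReal.ofReal_mul (by positivity), ← ENNReal.ofReal_mul (by positivity), mul_assoc]
    _ = ∫⁻ _ in Metric.ball c ρ, ENNReal.ofReal (m ^ (2 * Module.finrank ℝ E))⁻¹ ∂μ :=
        (setLIntegral_const _ _).symm
    _ ≤ ∫⁻ x in Metric.ball c ρ,
          ENNReal.ofReal (bracket x ^ (2 * Module.finrank ℝ E))⁻¹ ∂μ := by
        refine setLIntegral_mono' measurableSet_ball fun x hx ↦ ENNReal.ofReal_le_ofReal ?_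
        gcongr
        · exact pow_pos (bracket_pos x) _
        · exact (bracket_pos x).le
        · exact (h x (mem_ball_iff_norm.mp hx)).2
    _ ≤ chordalMeasure μ s := by
        rw [chordalMeasure_apply hs]
        exact lintegral_mono_set hsub

instance [Nontrivial E] : IsFiniteMeasure (chordalMeasure μ) := by
  have hdim : (Module.finrank ℝ E : ℝ) < 2 * Module.finrank ℝ E := by
    have : (0 : ℝ) < Module.finrank ℝ E := by exact_mod_cast Module.finrank_pos
    linarith
  have hint := integrable_rpow_neg_one_add_norm_sq (μ := μ) hdim
  have hpow (x : E) : (1 + ‖x‖ ^ 2) ^ (-(2 * Module.finrank ℝ E : ℝ) / 2)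
      = (bracket x ^ (2 * Module.finrank ℝ E))⁻¹ := by
    rw [Real.rpow_div_two_eq_sqrt _ (by positivity), Real.rpow_neg (Real.sqrt_nonneg _)]
    exact_mod_cast rfl
  simp only [hpow] at hint
  exact ⟨by simpa [chordalMeasure_apply] using hint.lintegral_lt_top⟩

theorem lintegral_comp_smul_of_pos {f : E → ℝ≥0∞} (hf : Measurable f) {r : ℝ} (hr : 0 < r) :
    ∫⁻ x, f (r • x) ∂μ = ENNReal.ofReal (r ^ Module.finrank ℝ E)⁻¹ * ∫⁻ x, f x ∂μ := by
  rw [← lintegral_map hf (measurable_const_smul r), Measure.map_addHaar_smul μ hr.ne',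
    lintegral_smul_measure, abs_of_pos (by positivity), smul_eq_mul]

theorem chordalMeasure_ball_infty_le [Nontrivial E] {r : ℝ} (hr : 0 < r) :
    chordalMeasure μ (Metric.ball infty r) ≤ ENNReal.ofReal
      (2 ^ Module.finrank ℝ E * (chordalMeasure μ).real Set.univ * r ^ Module.finrank ℝ E) := by
  set n := Module.finrank ℝ E
  let f (x : E) : ℝ≥0∞ := ENNReal.ofReal (bracket x ^ (2 * n))⁻¹
  have hf : Measurable f := by fun_prop
  have hle (x : E) (hx : point x ∈ Metric.ball infty r) :
      (bracket x ^ (2 * n))⁻¹ ≤ (2 * r ^ 2) ^ n * (bracket (r • x) ^ (2 * n))⁻¹ := by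
    have hpos := bracket_pos x
    have hpos' := bracket_pos (r • x)
    have hr₁ : 1 < r * bracket x := by
      rwa [Metric.mem_ball, dist_point_infty, inv_lt_iff_one_lt_mul₀ hpos] at hx
    have hsq : bracket (r • x) ^ 2 ≤ 2 * r ^ 2 * bracket x ^ 2 := by
      rw [sq_bracket, norm_smul, Real.norm_of_nonneg hr.le]
      nlinarith [sq_bracket x]
    rw [inv_eq_one_div, ← div_eq_mul_inv, div_le_div_iff₀ (by positivity) (by positivity), one_mul,
      pow_mul, pow_mul, ← mul_pow]
    gcongr
  calc chordalMeasure μ (Metric.ball infty r)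
      = ∫⁻ x in point ⁻¹' Metric.ball infty r, f x ∂μ := chordalMeasure_apply measurableSet_ball
    _ ≤ ∫⁻ x in point ⁻¹' Metric.ball infty r, ENNReal.ofReal ((2 * r ^ 2) ^ n) * f (r • x) ∂μ := by
        refine setLIntegral_mono' (measurable_point measurableSet_ball) fun x hx ↦ ?_
        rw [← ENNReal.ofReal_mul (by positivity)]
        exact ENNReal.ofReal_le_ofReal (hle x hx)
    _ ≤ ∫⁻ x, ENNReal.ofReal ((2 * r ^ 2) ^ n) * f (r • x) ∂μ := setLIntegral_le_lintegral _ _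
    _ = ENNReal.ofReal ((2 * r ^ 2) ^ n) *
          (ENNReal.ofReal (r ^ n)⁻¹ * chordalMeasure μ Set.univ) := by
        rw [lintegral_const_mul _ (by fun_prop : Measurable fun x ↦ f (r • x)),
          lintegral_comp_smul_of_pos hf hr, chordalMeasure_apply .univ, Set.preimage_univ,
          setLIntegral_univ]
    _ = _ := by
        rw [← ofReal_measureReal (measure_ne_top _ _), ← ENNReal.ofReal_mul (by positivity),
          ← ENNReal.ofReal_mul (by positivity)]
        congr 1
        field_simp
        ring

theorem exists_chordalMeasure_ball_point_le [Nontrivial E] :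
    ∃ C, ∀ (x : E), ∀ r > 0, chordalMeasure μ (Metric.ball (point x) r)
      ≤ ENNReal.ofReal (C * r ^ Module.finrank ℝ E) := by
  set n := Module.finrank ℝ E
  refine ⟨2 ^ n * (chordalMeasure μ).real Set.univ * 3 ^ n + (9 / 2) ^ n * μ.real (Metric.ball 0 1),
    fun x r hr ↦ ?_⟩
  have hx := bracket_pos x
  rcases lt_or_ge (bracket x)⁻¹ (2 * r) with hnear | hfar
  · have hsub : Metric.ball (point x) r ⊆ Metric.ball infty (3 * r) :=
      Metric.ball_subset_ball' (by rw [dist_point_infty]; linarith)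
    refine (measure_mono hsub).trans ((chordalMeasure_ball_infty_le (by positivity)).trans ?_)
    refine ENNReal.ofReal_le_ofReal ?_
    rw [mul_pow, ← mul_assoc]
    gcongr
    exact le_add_of_nonneg_right (by positivity)
  · refine (chordalMeasure_le measurableSet_ball (c := x) (m := (3 / 2 * (bracket x)⁻¹)⁻¹)
      (ρ := 2 * r * bracket x ^ 2) (by positivity) (by positivity) fun y hy ↦ ?_).trans
      (ENNReal.ofReal_le_ofReal ?_)
    · have hy₀ := bracket_pos y
      obtain ⟨hlower, hupper⟩ := abs_lt.mp
        ((abs_dist_sub_le (point y) (point x) infty).trans_lt (Metric.mem_ball.mp hy))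
      rw [dist_point_infty, dist_point_infty] at hlower hupper
      have hyx : bracket y < 2 * bracket x := by
        rw [← inv_lt_inv₀ (by positivity) hy₀, mul_inv]
        linarith
      rw [Metric.mem_ball, dist_point_point, div_lt_iff₀ (by positivity)] at hy
      refine ⟨hy.trans ?_, ?_⟩
      · calc r * (bracket y * bracket x) < r * (2 * bracket x * bracket x) := by gcongr
          _ = 2 * r * bracket x ^ 2 := by ring
      · rw [inv_le_comm₀ (by positivity) hy₀]
        linarith
    · have hpow : ((3 / 2 * (bracket x)⁻¹)⁻¹ ^ (2 * n))⁻¹ * (2 * r * bracket x ^ 2) ^ n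
          = (9 / 2) ^ n * r ^ n := by
        rw [inv_pow, inv_inv, pow_mul, ← mul_pow, ← mul_pow]
        congr 1
        field_simp
        norm_num
      rw [hpow, add_mul, mul_right_comm _ (r ^ n)]
      exact le_add_of_nonneg_left (by positivity)

theorem exists_le_chordalMeasure_ball_point (x : E) :
    ∃ c > 0, ∀ r, 0 < r → r ≤ 1 → ENNReal.ofReal (c * r ^ Module.finrank ℝ E)
      ≤ chordalMeasure μ (Metric.ball (point x) r) := by
  have hx := bracket_pos x
  have hball : 0 < μ.real (Metric.ball (0 : E) 1) :=
    ENNReal.toReal_pos (Metric.measure_ball_pos μ 0 one_pos).ne' measure_ball_lt_top.ne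
  refine ⟨((bracket x + 1) ^ (2 * Module.finrank ℝ E))⁻¹ * μ.real (Metric.ball 0 1),
    by positivity, fun r hr hr₁ ↦ ?_⟩
  rw [mul_right_comm]
  refine le_chordalMeasure measurableSet_ball (c := x) hr fun y hy ↦ ⟨?_, ?_⟩
  · exact (dist_point_point_le y x).trans_lt hy
  · exact (bracket_le_bracket_add_norm_sub y x).trans (by linarith)

theorem exists_le_chordalMeasure_ball_infty [Nontrivial E] :
    ∃ c > 0, ∀ r, 0 < r → r ≤ 1 → ENNReal.ofReal (c * r ^ Module.finrank ℝ E)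
      ≤ chordalMeasure μ (Metric.ball infty r) := by
  set n := Module.finrank ℝ E
  have hball : 0 < μ.real (Metric.ball (0 : E) 1) :=
    ENNReal.toReal_pos (Metric.measure_ball_pos μ 0 one_pos).ne' measure_ball_lt_top.ne
  refine ⟨(5 ^ (2 * n))⁻¹ * μ.real (Metric.ball 0 1), by positivity, fun r hr hr₁ ↦ ?_⟩
  have hr₁ : 1 ≤ 1 / r := by rwa [one_le_div hr]
  obtain ⟨c, hc⟩ := exists_norm_eq E (show 0 ≤ 3 * (1 / r) by positivity)
  have hpow : (5 ^ (2 * n))⁻¹ * μ.real (Metric.ball 0 1) * r ^ n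
      = ((5 * (1 / r)) ^ (2 * n))⁻¹ * (1 / r) ^ n * μ.real (Metric.ball 0 1) := by
    simp only [one_div, mul_pow, inv_pow, two_mul, pow_add]
    field_simp
  rw [hpow]
  refine le_chordalMeasure measurableSet_ball (c := c) (by positivity) fun y hy ↦ ⟨?_, ?_⟩
  · have hlarge : 1 / r < bracket y := by
      linarith [norm_le_bracket y, norm_le_norm_add_norm_sub y c, norm_sub_rev y c]
    rw [Metric.mem_ball, dist_point_infty]
    exact inv_lt_of_inv_lt₀ hr (by rwa [← one_div])
  · linarith [bracket_le_one_add_norm y, norm_le_norm_add_norm_sub' y c]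

variable (μ) in
theorem hasVolumeGrowth_chordalMeasure [Nontrivial E] :
    HasVolumeGrowth (chordalMeasure μ) (Module.finrank ℝ E) where
  upper := by
    obtain ⟨C, hpoint⟩ := exists_chordalMeasure_ball_point_le (μ := μ)
    refine ⟨max (2 ^ Module.finrank ℝ E * (chordalMeasure μ).real Set.univ) C, fun p r hr ↦ ?_⟩
    rw [Real.rpow_natCast]
    match p with
    | infty =>
      refine (chordalMeasure_ball_infty_le hr).trans (ENNReal.ofReal_le_ofReal ?_)
      gcongr
      exact le_max_left _ _
    | point x =>
      refine (hpoint x r hr).trans (ENNReal.ofReal_le_ofReal ?_)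
      gcongr
      exact le_max_right _ _
  lower p := by
    simp only [Real.rpow_natCast]
    match p with
    | infty => exact exists_le_chordalMeasure_ball_infty
    | point x => exact exists_le_chordalMeasure_ball_point x

end ChordalSphere

end ChordalSphere

section Transfer

theorem prod_prod_mul_mul_rpow {V : Type*} [Fintype V] {b n : V → V → ℝ} {J : V → ℝ}
    (hJ : ∀ u, 0 < J u) (hsymm : ∀ u w, b u w = b w u) :
    ∏ u, ∏ w, n u w * (J u ^ b u w * J w ^ b u w)
      = (∏ u, ∏ w, n u w) * ∏ u, J u ^ (2 * ∑ w, b u w) := by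
  have hleft : ∏ u, ∏ w, J u ^ b u w = ∏ u, J u ^ ∑ w, b u w := by
    simp only [Real.rpow_sum_of_pos (hJ _)]
  have hright : ∏ u, ∏ w, J w ^ b u w = ∏ u, J u ^ ∑ w, b u w := by
    rw [Finset.prod_comm, ← hleft]
    simp only [hsymm]
  simp only [Finset.prod_mul_distrib, hleft, hright, two_mul, Real.rpow_add (hJ _)]

variable {V E : Type*} [DecidableEq V]

/-- The configuration `x` on the sphere, with the vertex `o` moved to the point at infinity. -/
def sphereConfig (o : V) (x : V → E) (u : V) : ChordalSphere E :=
  if u = o then .infty else .point (x u)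

variable {o : V}

theorem sphereConfig_of_ne (x : V → E) {u : V} (hu : u ≠ o) :
    sphereConfig o x u = .point (x u) :=
  if_neg hu

theorem sphereConfig_update (x : V → E) {i : V} (hi : i ≠ o) (y : E) :
    sphereConfig o (Function.update x i y)
      = Function.update (sphereConfig o x) i (ChordalSphere.point y) := by
  ext u
  rcases eq_or_ne u i with rfl | hu
  · simp [sphereConfig_of_ne _ hi]
  · simp [sphereConfig, hu]

theorem injOn_sphereConfig {x : V → E} {s : Set V} (hx : Set.InjOn x (s \ {o})) :
    Set.InjOn (sphereConfig o x) s := by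
  intro u hu w hw huw
  by_cases huo : u = o <;> by_cases hwo : w = o
  · rw [huo, hwo]
  · simp [sphereConfig, huo, hwo] at huw
  · simp [sphereConfig, huo, hwo] at huw
  · rw [sphereConfig_of_ne x huo, sphereConfig_of_ne x hwo, ChordalSphere.point.injEq] at huw
    exact hx ⟨hu, huo⟩ ⟨hw, hwo⟩ huw

section Sphere

variable [NormedAddCommGroup E] [InnerProductSpace ℝ E]

theorem dist_sphereConfig_rpow {b : V → V → ℝ} (hdiag : ∀ u, b u u = 0) (x : V → E) (u w : V) :
    dist (sphereConfig o x u) (sphereConfig o x w) ^ (-b u w)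
      = (if u = o ∨ w = o then 1 else ‖x u - x w‖ ^ (-b u w))
        * ((if u = o then 1 else bracket (x u)) ^ b u w
          * (if w = o then 1 else bracket (x w)) ^ b u w) := by
  have hpos (u : V) := bracket_pos (x u)
  have hinv (u : V) (c : ℝ) : (bracket (x u))⁻¹ ^ (-c) = bracket (x u) ^ c := by
    rw [Real.inv_rpow (hpos u).le, Real.rpow_neg (hpos u).le, inv_inv]
  by_cases hu : u = o <;> by_cases hw : w = o
  · simp [hu, hw, hdiag]
  · simp [hu, hw, sphereConfig, ChordalSphere.dist_infty_point, hinv]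
  · simp [hu, hw, sphereConfig, ChordalSphere.dist_point_infty, hinv]
  · simp only [hu, hw, sphereConfig, ChordalSphere.dist_point_point, or_self, if_false]
    rw [Real.div_rpow (norm_nonneg _) (mul_pos (hpos u) (hpos w)).le,
      Real.mul_rpow (hpos u).le (hpos w).le, Real.rpow_neg (hpos u).le, Real.rpow_neg (hpos w).le,
      ← mul_inv, div_inv_eq_mul]

variable [MeasurableSpace E] [BorelSpace E]

theorem measurable_sphereConfig (o : V) :
    Measurable (sphereConfig o : (V → E) → V → ChordalSphere E) := by
  refine measurable_pi_lambda _ fun u ↦ ?_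
  unfold sphereConfig
  split_ifs <;> fun_prop

theorem lmarginal_chordalMeasure [FiniteDimensional ℝ E] [Nontrivial E] {μ : Measure E}
    [μ.IsAddHaarMeasure] {s : Finset V} (ho : o ∉ s) {F : (V → ChordalSphere E) → ℝ≥0∞}
    (hF : Measurable F) (x : V → E) :
    lmarginal (fun _ ↦ ChordalSphere.chordalMeasure μ) s F (sphereConfig o x)
      = lmarginal (fun _ ↦ μ) s (fun z ↦
          (∏ u ∈ s, ENNReal.ofReal (bracket (z u) ^ (2 * Module.finrank ℝ E))⁻¹)
            * F (sphereConfig o z)) x := by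
  have := measurable_sphereConfig (E := E) o
  induction s using Finset.induction_on generalizing F with
  | empty => simp
  | insert i s hi ih =>
    obtain ⟨hio, ho⟩ := not_or.mp (Finset.mem_insert.not.mp ho)
    rw [lmarginal_insert' _ hF hi, lmarginal_insert' _ (by fun_prop) hi, ih ho (by fun_prop)]
    congr 1
    ext z
    rw [ChordalSphere.lintegral_chordalMeasure (by fun_prop), ← lintegral_const_mul _ (by fun_prop)]
    refine lintegral_congr fun y ↦ ?_
    have hprod : ∏ u ∈ s, ENNReal.ofReal
          (bracket (Function.update z i y u) ^ (2 * Module.finrank ℝ E))⁻¹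
        = ∏ u ∈ s, ENNReal.ofReal (bracket (z u) ^ (2 * Module.finrank ℝ E))⁻¹ :=
      Finset.prod_congr rfl fun u hu ↦ by
        rw [Function.update_of_ne (ne_of_mem_of_not_mem hu hi)]
    rw [Finset.prod_insert hi, hprod, Function.update_self, sphereConfig_update z (Ne.symm hio)]
    ring

end Sphere

variable [NormedAddCommGroup E] [Fintype V]

/-- The product of the propagators `‖x u - x w‖ ^ (-b u w)` over the ordered pairs avoiding `o`. -/
noncomputable def affinePropagatorProd (o : V) (b : V → V → ℝ) (x : V → E) : ℝ :=
  ∏ u ∈ {o}ᶜ, ∏ w ∈ {o}ᶜ, ‖x u - x w‖ ^ (-b u w)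

theorem affinePropagatorProd_nonneg (b : V → V → ℝ) (x : V → E) :
    0 ≤ affinePropagatorProd o b x :=
  Finset.prod_nonneg fun _ _ ↦ Finset.prod_nonneg fun _ _ ↦ Real.rpow_nonneg (norm_nonneg _) _

theorem measurable_affinePropagatorProd [MeasurableSpace E] [BorelSpace E]
    [SecondCountableTopology E] (b : V → V → ℝ) :
    Measurable (affinePropagatorProd o b : (V → E) → ℝ) := by
  unfold affinePropagatorProd
  fun_prop

variable [InnerProductSpace ℝ E] {b : V → V → ℝ}

theorem propagatorProd_sphereConfig (hsymm : ∀ u w, b u w = b w u) (hdiag : ∀ u, b u u = 0)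
    (x : V → E) :
    propagatorProd b (sphereConfig o x)
      = affinePropagatorProd o b x * ∏ u ∈ {o}ᶜ, bracket (x u) ^ (2 * ∑ w, b u w) := by
  have hJ (u : V) : 0 < if u = o then 1 else bracket (x u) := by
    split_ifs
    exacts [one_pos, bracket_pos _]
  simp only [propagatorProd, dist_sphereConfig_rpow hdiag, prod_prod_mul_mul_rpow hJ hsymm]
  congr 1
  · rw [affinePropagatorProd, Fintype.prod_eq_mul_prod_compl o, Finset.prod_eq_one (by simp),
      one_mul]
    refine Finset.prod_congr rfl fun u hu ↦ ?_
    rw [Fintype.prod_eq_mul_prod_compl o, if_pos (Or.inr rfl), one_mul]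
    exact Finset.prod_congr rfl fun w hw ↦ if_neg (by simp_all)
  · rw [Fintype.prod_eq_mul_prod_compl o, if_pos rfl, Real.one_rpow, one_mul]
    exact Finset.prod_congr rfl fun u hu ↦ by rw [if_neg (by simpa using hu)]

variable [MeasurableSpace E] [BorelSpace E] [FiniteDimensional ℝ E] [Nontrivial E]
  {μ : Measure E} [μ.IsAddHaarMeasure]

/-- The degree condition at the internal vertices turns the conformal factors into the density of
the chordal measure; the one at the external vertices makes them trivial. -/
theorem lmarginal_affinePropagatorProd {ext : Finset V} (ho : o ∈ ext)
    (hsymm : ∀ u w, b u w = b w u) (hdiag : ∀ u, b u u = 0)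
    (hint : ∀ u ∉ ext, ∑ w, b u w = Module.finrank ℝ E) (hext : ∀ u ∈ ext, ∑ w, b u w = 0)
    (x : V → E) :
    lmarginal (fun _ ↦ μ) extᶜ (fun z ↦ ENNReal.ofReal (affinePropagatorProd o b z)) x
      = lmarginal (fun _ ↦ ChordalSphere.chordalMeasure μ) extᶜ
          (fun p ↦ ENNReal.ofReal (propagatorProd b p)) (sphereConfig o x) := by
  rw [lmarginal_chordalMeasure (by simpa) (measurable_propagatorProd b).ennreal_ofReal]
  congr 1
  ext z
  have hpos (u : V) := bracket_pos (z u)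
  have hweight : ∏ u ∈ {o}ᶜ, bracket (z u) ^ (2 * ∑ w, b u w)
      = ∏ u ∈ extᶜ, bracket (z u) ^ (2 * Module.finrank ℝ E) := by
    rw [← Finset.prod_subset (Finset.compl_subset_compl.mpr (Finset.singleton_subset_iff.mpr ho))]
    · refine Finset.prod_congr rfl fun u hu ↦ ?_
      rw [hint u (Finset.mem_compl.mp hu)]
      exact_mod_cast Real.rpow_natCast _ _
    · intro u _ hu
      rw [hext u (by simpa using hu), mul_zero, Real.rpow_zero]
  rw [propagatorProd_sphereConfig hsymm hdiag, hweight, ← ENNReal.ofReal_prod_of_nonneg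
    fun u _ ↦ inv_nonneg.mpr (pow_pos (hpos u) _).le, ← ENNReal.ofReal_mul (Finset.prod_nonneg
    fun u _ ↦ inv_nonneg.mpr (pow_pos (hpos u) _).le), Finset.prod_inv_distrib, mul_left_comm,
    inv_mul_cancel₀ (Finset.prod_pos fun u _ ↦ pow_pos (hpos u) _).ne', mul_one]

theorem lmarginal_affinePropagatorProd_lt_top_iff {ext : Finset V} (ho : o ∈ ext)
    (hsymm : ∀ u w, b u w = b w u) (hdiag : ∀ u, b u u = 0)
    (hint : ∀ u ∉ ext, ∑ w, b u w = Module.finrank ℝ E) (hext : ∀ u ∈ ext, ∑ w, b u w = 0)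
    {x : V → E} (hx : Set.InjOn x (ext.erase o)) :
    lmarginal (fun _ ↦ μ) extᶜ (fun z ↦ ENNReal.ofReal (affinePropagatorProd o b z)) x < ⊤ ↔
      ∀ W : Finset V, 2 ≤ W.card → (W ∩ ext).card ≤ 1 →
        ∑ u ∈ W, ∑ w ∈ W, b u w < Module.finrank ℝ E * ((W.card : ℝ) - 1) := by
  have hgrowth := ChordalSphere.hasVolumeGrowth_chordalMeasure μ
  have hdim : (0 : ℝ) < Module.finrank ℝ E := by exact_mod_cast Module.finrank_pos
  have hsphere : Set.InjOn (sphereConfig o x) ext := injOn_sphereConfig (by simpa using hx)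
  rw [lmarginal_affinePropagatorProd ho hsymm hdiag hint hext]
  refine ⟨fun hfin W hW hWext ↦ ?_, fun hb ↦ ?_⟩
  · by_contra! hW'
    exact hfin.ne (lmarginal_propagatorProd_eq_top hgrowth hdim ChordalSphere.dist_le_one hdiag hW
      hWext hW' hsphere)
  · exact lmarginal_propagatorProd_lt_top hgrowth hdim ChordalSphere.dist_le_one hdiag ⟨o, ho⟩ hb
      hsphere

end Transfer

section Main

/-- Each edge arises from two ordered pairs, which carry half of its weight each. -/
theorem prod_sym2_eq_prod_prod {V M : Type*} [Fintype V] [DecidableEq V] [CommMonoid M] (o : V)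
    {f : V → V → M} (hf : ∀ u, f u u = 1) :
    ∏ e ∈ Finset.univ.filter (fun e : Sym2 V ↦ ¬ e.IsDiag ∧ o ∉ e),
        Sym2.lift ⟨fun u w ↦ f u w * f w u, fun _ _ ↦ mul_comm _ _⟩ e
      = ∏ u ∈ {o}ᶜ, ∏ w ∈ {o}ᶜ, f u w := by
  let P : Finset (V × V) := (({o}ᶜ : Finset V) ×ˢ {o}ᶜ).filter fun p ↦ p.1 ≠ p.2
  have hP (p : V × V) : p ∈ P ↔ s(p.1, p.2) ∈
      Finset.univ.filter (fun e : Sym2 V ↦ ¬ e.IsDiag ∧ o ∉ e) := by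
    simp only [P, Finset.mem_filter, Finset.mem_product, Finset.mem_compl, Finset.mem_singleton,
      Finset.mem_univ, true_and, Sym2.mk_isDiag_iff, Sym2.mem_iff, eq_comm (a := o)]
    tauto
  have hoffDiag : ∏ u ∈ {o}ᶜ, ∏ w ∈ {o}ᶜ, f u w = ∏ p ∈ P, f p.1 p.2 := by
    rw [← Finset.prod_product', Finset.prod_filter_of_ne]
    exact fun p _ hp hdiag ↦ hp (hdiag ▸ hf p.1)
  rw [hoffDiag, ← Finset.prod_fiberwise_of_maps_to fun p hp ↦ (hP p).mp hp]
  refine Finset.prod_congr rfl fun e he ↦ ?_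
  induction e using Sym2.ind with
  | _ u w =>
    have huw : u ≠ w := by simpa using (Finset.mem_filter.mp he).2.1
    have hfiber : P.filter (fun p ↦ s(p.1, p.2) = s(u, w)) = {(u, w), (w, u)} := by
      ext ⟨a, c⟩
      rw [Finset.mem_filter, hP, and_iff_right_of_imp fun h ↦ h ▸ he]
      simp
    rw [hfiber, Finset.prod_pair (by simp [huw]), Sym2.lift_mk]

theorem prod_sym2_eq_affinePropagatorProd {V E : Type*} [Fintype V] [DecidableEq V]
    [NormedAddCommGroup E] (o : V) {ν : V → V → ℝ} (hsymm : ∀ u w, ν u w = ν w u)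
    (hdiag : ∀ u, ν u u = 0) (lam : ℝ) (x : V → E) :
    ∏ e ∈ Finset.univ.filter (fun e : Sym2 V ↦ ¬ e.IsDiag ∧ o ∉ e),
        Sym2.lift ⟨fun u w ↦ ‖x u - x w‖ ^ (-(lam * (ν u w + ν w u))),
          fun u w ↦ by dsimp only; rw [norm_sub_rev, add_comm (ν u w)]⟩ e
      = affinePropagatorProd o (fun u w ↦ lam * ν u w) x := by
  have hsq (u w : V) : ‖x u - x w‖ ^ (-(lam * (ν u w + ν w u)))
      = ‖x u - x w‖ ^ (-(lam * ν u w)) * ‖x w - x u‖ ^ (-(lam * ν w u)) := by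
    rw [norm_sub_rev (x w), hsymm w u, ← sq, ← Real.rpow_mul_natCast (norm_nonneg _)]
    congr 1
    push_cast
    ring
  simp only [hsq]
  exact prod_sym2_eq_prod_prod o (f := fun u w ↦ ‖x u - x w‖ ^ (-(lam * ν u w))) (by simp [hdiag])

theorem lintegral_pi_subtype_eq_lmarginal {V E : Type*} [Fintype V] [DecidableEq V]
    [MeasurableSpace E] (μ : Measure E) [SigmaFinite μ] {ext : Finset V} {x₀ : V → E}
    {pos : ({u : V // u ∉ ext} → E) → V → E} (hint : ∀ Y u, ∀ h : u ∉ ext, pos Y u = Y ⟨u, h⟩)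
    (hext : ∀ Y, ∀ u ∈ ext, pos Y u = x₀ u) (F : (V → E) → ℝ≥0∞) :
    ∫⁻ Y, F (pos Y) ∂Measure.pi (fun _ ↦ μ) = lmarginal (fun _ ↦ μ) extᶜ F x₀ := by
  let σ : {u : V // u ∉ ext} ≃ ↥extᶜ := Equiv.subtypeEquivRight (by simp)
  rw [lmarginal, ← (measurePreserving_piCongrLeft (fun _ : ↥extᶜ ↦ μ) σ).lintegral_comp_emb
    (MeasurableEquiv.measurableEmbedding _)]
  refine lintegral_congr fun Y ↦ congrArg F ?_
  ext u
  by_cases hu : u ∈ ext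
  · simp [Function.updateFinset, hu, hext]
  · have hσ : (⟨u, Finset.mem_compl.mpr hu⟩ : ↥extᶜ) = σ ⟨u, hu⟩ := rfl
    rw [Function.updateFinset, dif_pos (Finset.mem_compl.mpr hu), hσ,
      MeasurableEquiv.coe_piCongrLeft, Equiv.piCongrLeft_apply_apply, hint]

theorem integrable_affinePropagatorProd_iff {V E : Type*} [Fintype V] [DecidableEq V]
    [NormedAddCommGroup E] [MeasurableSpace E] [BorelSpace E] [SecondCountableTopology E]
    (μ : Measure E) [SigmaFinite μ] {ext : Finset V} {x₀ : V → E}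
    {pos : ({u : V // u ∉ ext} → E) → V → E} (hint : ∀ Y u, ∀ h : u ∉ ext, pos Y u = Y ⟨u, h⟩)
    (hext : ∀ Y, ∀ u ∈ ext, pos Y u = x₀ u) (o : V) (b : V → V → ℝ) :
    Integrable (fun Y ↦ affinePropagatorProd o b (pos Y)) (Measure.pi fun _ ↦ μ) ↔
      lmarginal (fun _ ↦ μ) extᶜ (fun x ↦ ENNReal.ofReal (affinePropagatorProd o b x)) x₀ < ⊤ := by
  have hpos : Measurable pos := by
    refine measurable_pi_lambda _ fun u ↦ ?_
    by_cases hu : u ∈ ext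
    · simp only [hext _ u hu, measurable_const]
    · simpa only [hint _ u hu] using measurable_pi_apply _
  have hmeas : Measurable fun Y ↦ affinePropagatorProd o b (pos Y) :=
    (measurable_affinePropagatorProd b).comp hpos
  rw [Integrable, and_iff_right hmeas.aestronglyMeasurable,
    hasFiniteIntegral_iff_ofReal (.of_forall fun _ ↦ affinePropagatorProd_nonneg _ _),
    ← lintegral_pi_subtype_eq_lmarginal μ hint hext]

theorem weight_lt_iff {V : Type*} [DecidableEq V] (ν : V → V → ℝ) (W ext : Finset V) {lam : ℝ}
    (hlam : 0 < lam) :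
    (∑ u ∈ W, ∑ w ∈ W, ν u w) / 2 - (lam + 1) / lam * ((W \ ext).card : ℝ)
        < (((W ∩ ext).card : ℝ) - 1) * ((lam + 1) / lam) ↔
      ∑ u ∈ W, ∑ w ∈ W, lam * ν u w < 2 * (lam + 1) * ((W.card : ℝ) - 1) := by
  have hcard : (W.card : ℝ) = (W \ ext).card + (W ∩ ext).card := by
    exact_mod_cast (Finset.card_sdiff_add_card_inter W ext).symm
  have hdiff : (((W ∩ ext).card : ℝ) - 1) * ((lam + 1) / lam)
        - ((∑ u ∈ W, ∑ w ∈ W, ν u w) / 2 - (lam + 1) / lam * ((W \ ext).card : ℝ))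
      = (2 * (lam + 1) * ((W.card : ℝ) - 1) - lam * ∑ u ∈ W, ∑ w ∈ W, ν u w) / (2 * lam) := by
    rw [hcard]
    field_simp
    ring
  simp only [← Finset.mul_sum]
  rw [← sub_pos, hdiff, div_pos_iff_of_pos_right (by positivity), sub_pos]

end Main

end GraphicalFunction

open GraphicalFunction in
theorem completed_graphical_function_convergence_general {E : Type*} [NormedAddCommGroup E]
    [InnerProductSpace ℝ E] [FiniteDimensional ℝ E] [MeasurableSpace E] [BorelSpace E]
    (μ : Measure E) [μ.IsAddHaarMeasure] {D : ℕ} (hE : Module.finrank ℝ E = D) (hD : 2 < D)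
    {V : Type*} [Fintype V] [DecidableEq V] {ext : Finset V} {vinf : V} (hvinf : vinf ∈ ext)
    {ν : V → V → ℝ} (hsymm : ∀ u w, ν u w = ν w u) (hdiag : ∀ u, ν u u = 0)
    (hdegint : ∀ u ∉ ext, ∑ w, ν u w = (D : ℝ) / ((D : ℝ) / 2 - 1))
    (hdegext : ∀ u ∈ ext, ∑ w, ν u w = 0)
    {x₀ : V → E} (hx₀ : Set.InjOn x₀ (ext.erase vinf))
    {pos : ({u : V // u ∉ ext} → E) → V → E}
    (hposint : ∀ Y u, ∀ h : u ∉ ext, pos Y u = Y ⟨u, h⟩)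
    (hposext : ∀ Y, ∀ u ∈ ext, pos Y u = x₀ u) :
    let lam : ℝ := (D : ℝ) / 2 - 1
    Integrable (fun Y ↦ ∏ ed ∈ Finset.univ.filter (fun ed : Sym2 V ↦ ¬ ed.IsDiag ∧ vinf ∉ ed),
        Sym2.lift ⟨fun u w ↦ ‖pos Y u - pos Y w‖ ^ (-(lam * (ν u w + ν w u))),
          fun u w ↦ by dsimp only; rw [norm_sub_rev, add_comm (ν u w)]⟩ ed)
        (Measure.pi fun _ ↦ μ) ↔
      ∀ W : Finset V, 2 ≤ W.card → (W ∩ ext).card ≤ 1 →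
        (∑ u ∈ W, ∑ w ∈ W, ν u w) / 2 - (lam + 1) / lam * ((W \ ext).card : ℝ)
          < (((W ∩ ext).card : ℝ) - 1) * ((lam + 1) / lam) := by
  intro lam
  have hD' : (D : ℝ) = 2 * (lam + 1) := by ring
  have hlam : 0 < lam := by
    have : (2 : ℝ) < D := by exact_mod_cast hD
    linarith
  have : Nontrivial E := Module.nontrivial_of_finrank_pos (R := ℝ) (by omega)
  have hbint : ∀ u ∉ ext, ∑ w, lam * ν u w = Module.finrank ℝ E := fun u hu ↦ by
    rw [← Finset.mul_sum, hdegint u hu, mul_div_cancel₀ _ hlam.ne', hE]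
  have hbext : ∀ u ∈ ext, ∑ w, lam * ν u w = 0 := fun u hu ↦ by
    rw [← Finset.mul_sum, hdegext u hu, mul_zero]
  simp only [prod_sym2_eq_affinePropagatorProd vinf hsymm hdiag]
  rw [integrable_affinePropagatorProd_iff μ hposint hposext,
    lmarginal_affinePropagatorProd_lt_top_iff hvinf (by simp [hsymm]) (by simp [hdiag])
      hbint hbext hx₀, hE, hD']
  simp only [weight_lt_iff ν _ ext hlam]

/-- Convergence criterion for completed graphical functions: the integral over
the internal vertices converges iff every subgraph with at least two vertices
and at most one external vertex satisfies the weight inequality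
`N_{Ḡ[V]} < (|V ∩ V_ext| − 1)·(λ+1)/λ`. -/
theorem completed_graphical_function_convergence
    (D : ℕ) (hD : 4 ≤ D) (hDeven : Even D)
    (V : Type) [Fintype V] [DecidableEq V]
    (v0 v1 vz vinf : V)
    (h01 : v0 ≠ v1) (h0z : v0 ≠ vz) (h0i : v0 ≠ vinf)
    (h1z : v1 ≠ vz) (h1i : v1 ≠ vinf) (hzi : vz ≠ vinf)
    (ν : V → V → ℝ) (hsym : ∀ u w, ν u w = ν w u) (hdiag : ∀ u, ν u u = 0)
    (hdegint : ∀ u : V, u ∉ ({v0, v1, vz, vinf} : Finset V) →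
      ∑ w : V, ν u w = (D : ℝ) / ((D : ℝ) / 2 - 1))
    (hdegext : ∀ u ∈ ({v0, v1, vz, vinf} : Finset V), ∑ w : V, ν u w = 0)
    (e y : EuclideanSpace ℝ (Fin D)) (he : ‖e‖ = 1)
    (hy0 : y ≠ 0) (hye : y ≠ e) (hncol : ∀ t : ℝ, y ≠ t • e) :
    let lam : ℝ := (D : ℝ) / 2 - 1
    let extV : Finset V := {v0, v1, vz, vinf}
    let pos : ({u : V // u ∉ ({v0, v1, vz, vinf} : Finset V)} →
        EuclideanSpace ℝ (Fin D)) → V → EuclideanSpace ℝ (Fin D) :=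
      fun Y u =>
        if u = v0 then 0 else if u = v1 then e else if u = vz then y
        else if h : u ∉ ({v0, v1, vz, vinf} : Finset V) then Y ⟨u, h⟩ else 0
    let N : Finset V → ℝ := fun W =>
      (∑ u ∈ W, ∑ w ∈ W, ν u w) / 2 - ((lam + 1) / lam) * ((W \ extV).card : ℝ)
    (Integrable (fun Y : {u : V // u ∉ ({v0, v1, vz, vinf} : Finset V)} →
        EuclideanSpace ℝ (Fin D) =>
      ∏ ed ∈ Finset.univ.filter (fun ed : Sym2 V => ¬ ed.IsDiag ∧ vinf ∉ ed),
        Sym2.lift ⟨fun u w => ‖pos Y u - pos Y w‖ ^ (-(lam * (ν u w + ν w u))),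
          fun u w => by dsimp only; rw [norm_sub_rev, add_comm (ν u w)]⟩ ed))
    ↔ ∀ W : Finset V, 2 ≤ W.card → (W ∩ extV).card ≤ 1 →
        N W < (((W ∩ extV).card : ℝ) - 1) * ((lam + 1) / lam) := by

  intro lam extV pos _
  have he₀ : e ≠ 0 := norm_ne_zero_iff.mp (he ▸ one_ne_zero)
  have hv₀ : pos 0 v0 = 0 := if_pos rfl
  have hv₁ : pos 0 v1 = e := by simp [pos, h01.symm]
  have hvz : pos 0 vz = y := by simp [pos, h0z.symm, h1z.symm]
  refine completed_graphical_function_convergence_general volume finrank_euclideanSpace_fin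
    (by omega) (by simp) hsym hdiag hdegint hdegext (x₀ := pos 0) (pos := pos) ?_ ?_ ?_
  · have herase : (extV.erase vinf : Set V) ⊆ {v0, v1, vz} := by
      intro u
      simp only [extV, Finset.coe_erase, Finset.coe_insert, Finset.coe_singleton, Set.mem_sdiff,
        Set.mem_insert_iff, Set.mem_singleton_iff]
      tauto
    refine Set.InjOn.mono herase ?_
    simp [Set.injOn_insert, hye.symm, *]
  · intro Y u hu
    have := hu
    simp only [Finset.mem_insert, Finset.mem_singleton, not_or] at this
    simp [pos, *]
  · intro Y u hu
    simp only [pos, dif_neg (not_not.mpr hu)]
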